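/- arXiv:0710.4358 — 4 statements merged into one kernel-verified Lean document; each statement's English description precedes it below -/
import Mathlib

section
/- Suppose L is a metric flag labeled triangulation of the 2-sphere that is not the boundary complex of a 3-simplex (i.e. L does not consist of four pairwise-joined vertices spanning four 2-simplices). If s is a 3-Euclidean vertex of L, then both the link L_s and the closed star St_L(s) are full subcomplexes of L. -/
open Geometry

/-- The ambient space for our simplicial complexes. -/
abbrev E3 : Type := EuclideanSpace ℝ (Fin 3)

noncomputable instance : DecidableEq E3 := Classical.decEq _

namespace CoxOrb

variable (L : SimplicialComplex ℝ E3) (m : E3 → E3 → ℕ)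

/-- `L` is a labeled triangulation of the 2-sphere with edge labeling `m`:
`L` is finite, its underlying space is homeomorphic to the 2-sphere, and `m`
is symmetric with `m s t ≥ 2` on every edge `{s, t}` of `L`. -/
structure IsLabeledS2 : Prop where
  finite : L.faces.Finite
  sphere : Nonempty (L.space ≃ₜ (Metric.sphere (0 : E3) 1 : Set E3))
  symm : ∀ s t : E3, m s t = m t s
  two_le : ∀ s t : E3, s ≠ t → ({s, t} : Finset E3) ∈ L.faces → 2 ≤ m s t

/-- `L` with labeling `m` is metric flag: three pairwise-joined vertices span a
2-simplex iff the corresponding angle sum `π/m_st + π/m_tu + π/m_us` exceeds `π`. -/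
def MetricFlag : Prop :=
  ∀ s t u : E3, s ≠ t → t ≠ u → s ≠ u →
    ({s, t} : Finset E3) ∈ L.faces → ({t, u} : Finset E3) ∈ L.faces →
    ({s, u} : Finset E3) ∈ L.faces →
    (({s, t, u} : Finset E3) ∈ L.faces ↔
      1 / (m s t : ℝ) + 1 / (m t u : ℝ) + 1 / (m u s : ℝ) > 1)

/-- The link of a vertex `s`, as a set of faces of `L`. -/
def link (s : E3) : Set (Finset E3) :=
  {F | F ∈ L.faces ∧ s ∉ F ∧ insert s F ∈ L.faces}

/-- The closed star of a vertex `s`: all faces of `L` contained in some face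
containing `s`. -/
def star (s : E3) : Set (Finset E3) :=
  {F | F ∈ L.faces ∧ ∃ G ∈ L.faces, s ∈ G ∧ F ⊆ G}

/-- The vertices of the link of `s`. -/
def linkVerts (s : E3) : Set E3 :=
  {v | v ≠ s ∧ ({s, v} : Finset E3) ∈ L.faces}

/-- A set of faces `A` is a full subcomplex of `L`: every face of `L` all of
whose vertices are vertices of `A` belongs to `A`. -/
def IsFullSubcomplex (A : Set (Finset E3)) : Prop :=
  A ⊆ L.faces ∧ ∀ F ∈ L.faces, (∀ v ∈ F, ({v} : Finset E3) ∈ A) → F ∈ A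

/-- `s` is a 3-Euclidean vertex of `L`: it has valence three and the labels on
the three edges of its link have reciprocals summing to one. -/
def IsThreeEuclidean (s : E3) : Prop :=
  ({s} : Finset E3) ∈ L.faces ∧
  ∃ s₀ s₁ s₂ : E3, s₀ ≠ s₁ ∧ s₁ ≠ s₂ ∧ s₀ ≠ s₂ ∧
    linkVerts L s = {s₀, s₁, s₂} ∧
    1 / (m s₀ s₁ : ℝ) + 1 / (m s₁ s₂ : ℝ) + 1 / (m s₂ s₀ : ℝ) = 1

/-- `s` is a 4-Euclidean vertex of `L`: it has valence four, its link is the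
4-circuit on `v 0, v 1, v 2, v 3` (in cyclic order), and the labels on the
edges of the link are all `2`. -/
def IsFourEuclidean (s : E3) : Prop :=
  ({s} : Finset E3) ∈ L.faces ∧
  ∃ v : Fin 4 → E3, Function.Injective v ∧
    linkVerts L s = {v 0, v 1, v 2, v 3} ∧
    (∀ i : Fin 4, ({s, v i, v (i + 1)} : Finset E3) ∈ L.faces) ∧
    (∀ i : Fin 4, m (v i) (v (i + 1)) = 2)

/-- `L` is the boundary complex of a 3-simplex: four pairwise-joined vertices
spanning four 2-simplices. -/
def IsBoundaryOfThreeSimplex : Prop :=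
  ∃ a b c d : E3, a ≠ b ∧ a ≠ c ∧ a ≠ d ∧ b ≠ c ∧ b ≠ d ∧ c ≠ d ∧
    (∀ v : E3, ({v} : Finset E3) ∈ L.faces ↔ v = a ∨ v = b ∨ v = c ∨ v = d) ∧
    ({a, b, c} : Finset E3) ∈ L.faces ∧ ({a, b, d} : Finset E3) ∈ L.faces ∧
    ({a, c, d} : Finset E3) ∈ L.faces ∧ ({b, c, d} : Finset E3) ∈ L.faces

/-- `L` is the suspension of a 3-gon. -/
def IsSuspensionOfThreeGon : Prop :=
  ∃ t t' s₀ s₁ s₂ : E3, [t, t', s₀, s₁, s₂].Pairwise (· ≠ ·) ∧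
    (∀ v : E3, ({v} : Finset E3) ∈ L.faces ↔ v = t ∨ v = t' ∨ v = s₀ ∨ v = s₁ ∨ v = s₂) ∧
    ({s₀, s₁} : Finset E3) ∈ L.faces ∧ ({s₁, s₂} : Finset E3) ∈ L.faces ∧
    ({s₀, s₂} : Finset E3) ∈ L.faces ∧
    ({t, s₀} : Finset E3) ∈ L.faces ∧ ({t, s₁} : Finset E3) ∈ L.faces ∧
    ({t, s₂} : Finset E3) ∈ L.faces ∧
    ({t', s₀} : Finset E3) ∈ L.faces ∧ ({t', s₁} : Finset E3) ∈ L.faces ∧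
    ({t', s₂} : Finset E3) ∈ L.faces ∧
    ({t, t'} : Finset E3) ∉ L.faces

/-- The simplicial join of the subcomplex `Z` with the two points `t, t'`. -/
def joinSusp (Z : Set (Finset E3)) (t t' : E3) : Set (Finset E3) :=
  Z ∪ {{t}, {t'}} ∪ ((fun F => insert t F) '' Z) ∪ ((fun F => insert t' F) '' Z)

/-- `T` is the right-angled suspension in `L` of the subcomplex `Z` with
suspension points `t, t'` (not joined by an edge of `T`): every edge from a
suspension point to a vertex of `Z` is labeled `2`. -/
structure IsRASuspData (T Z : Set (Finset E3)) (t t' : E3) : Prop where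
  subset : T ⊆ L.faces
  zsubset : Z ⊆ L.faces
  zdown : ∀ F ∈ Z, ∀ G : Finset E3, G ⊆ F → G.Nonempty → G ∈ Z
  znonempty : Z.Nonempty
  tne : t ≠ t'
  t_notin : ∀ F ∈ Z, t ∉ F
  t'_notin : ∀ F ∈ Z, t' ∉ F
  labels : ∀ v : E3, ({v} : Finset E3) ∈ Z → m t v = 2 ∧ m t' v = 2
  eq : T = joinSusp Z t t'

/-- `T` is a right-angled suspension in `L`. -/
def IsRASusp (T : Set (Finset E3)) : Prop :=
  ∃ Z t t', IsRASuspData L m T Z t t'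

/-- The base `Z` of the suspension is neither a single vertex nor a single
edge, so that the suspension is infinite. -/
def InfiniteBase (Z : Set (Finset E3)) : Prop :=
  (¬ ∃ v : E3, Z = {({v} : Finset E3)}) ∧
  (¬ ∃ u v : E3, u ≠ v ∧ Z = {({u} : Finset E3), ({v} : Finset E3), ({u, v} : Finset E3)})

/-- `T` is an infinite, maximal right-angled suspension in `L`: it is an
RA-suspension of a full subcomplex which is neither a vertex nor an edge, and
`T` is not properly contained in another RA-suspension. -/
def IsInfMaxRASusp (T : Set (Finset E3)) : Prop :=
  (∃ Z t t', IsRASuspData L m T Z t t' ∧ InfiniteBase Z ∧ IsFullSubcomplex L Z) ∧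
  ∀ T', IsRASusp L m T' → T ⊆ T' → T = T'

/-- `v 0, v 1, v 2, v 3` (in cyclic order) form a Euclidean 4-circuit of `L`:
all four edge labels are `2` and the circuit is not the boundary of the union
of two 2-simplices of `L` sharing an edge. -/
def IsEuclidean4Circuit (v : Fin 4 → E3) : Prop :=
  Function.Injective v ∧
  (∀ i : Fin 4, ({v i, v (i + 1)} : Finset E3) ∈ L.faces) ∧
  (∀ i : Fin 4, m (v i) (v (i + 1)) = 2) ∧
  ¬ ((({v 0, v 1, v 2} : Finset E3) ∈ L.faces ∧ ({v 0, v 2, v 3} : Finset E3) ∈ L.faces) ∨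
     (({v 1, v 2, v 3} : Finset E3) ∈ L.faces ∧ ({v 0, v 1, v 3} : Finset E3) ∈ L.faces))

/-- The subcomplex consisting of the vertices and edges of the 4-circuit `v`. -/
def circuitComplex (v : Fin 4 → E3) : Set (Finset E3) :=
  {F | (∃ i : Fin 4, F = {v i}) ∨ (∃ i : Fin 4, F = {v i, v (i + 1)})}

/-- `T` is the right-angled cone on a Euclidean 4-circuit: the closed star of a
vertex `c` of valence four whose link is a Euclidean 4-circuit, all four edges
containing `c` being labeled `2`. -/
def IsRAConeOn4Circuit (T : Set (Finset E3)) : Prop :=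
  ∃ (c : E3) (v : Fin 4 → E3), IsEuclidean4Circuit L m v ∧
    linkVerts L c = {v 0, v 1, v 2, v 3} ∧
    (∀ i : Fin 4, ({c, v i, v (i + 1)} : Finset E3) ∈ L.faces) ∧
    (∀ i : Fin 4, m c (v i) = 2) ∧
    T = star L c

/-- The generating relation for Seifert subcomplexes: two infinite, maximal
RA-suspensions whose intersection is a Euclidean 4-circuit. -/
def SeifertRel (S S' : Set (Finset E3)) : Prop :=
  IsInfMaxRASusp L m S ∧ IsInfMaxRASusp L m S' ∧
  ∃ v : Fin 4 → E3, IsEuclidean4Circuit L m v ∧ S ∩ S' = circuitComplex v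

/-- `D` is a Seifert subcomplex of `L`: the union of the members of an
equivalence class of infinite, maximal RA-suspensions under the equivalence
relation generated by `SeifertRel`. -/
def IsSeifertSubcomplex (D : Set (Finset E3)) : Prop :=
  ∃ S₀, IsInfMaxRASusp L m S₀ ∧
    D = ⋃₀ {S | IsInfMaxRASusp L m S ∧ Relation.EqvGen (SeifertRel L m) S₀ S}

end CoxOrb

open CoxOrb


/-- Every nonvanishing continuous complex function on `A` has a continuous logarithm. -/
def HasLog (A : Set E3) : Prop :=
  ∀ f : E3 → ℂ, ContinuousOn f A → (∀ x ∈ A, f x ≠ 0) →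
    ∃ l : E3 → ℂ, ContinuousOn l A ∧ ∀ x ∈ A, Complex.exp (l x) = f x

lemma log_unique {A : Type*} [TopologicalSpace A] {S : Set A} (hS : IsPreconnected S)
    {l₁ l₂ : A → ℂ} (h₁ : ContinuousOn l₁ S) (h₂ : ContinuousOn l₂ S)
    (he : ∀ x ∈ S, Complex.exp (l₁ x) = Complex.exp (l₂ x)) {a : A} (ha : a ∈ S)
    (hla : l₁ a = l₂ a) : ∀ x ∈ S, l₁ x = l₂ x :=
  Complex.isCoveringMap_exp.eqOn_of_comp_eqOn hS h₁ h₂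
    (fun x hx => Subtype.ext (he x hx)) ha hla

lemma hasLog_of_convex {A : Set E3} (hA : Convex ℝ A) : HasLog A := by
  intro f hf hf0
  rcases A.eq_empty_or_nonempty with rfl | hne
  · exact ⟨0, by simp, by simp⟩
  have := hA.contractibleSpace hne
  have := hA.locallyPathConnectedSpace
  obtain ⟨x₀, hx₀⟩ := hne
  rcases Complex.isCoveringMapOn_exp.existsUnique_continuousMap_lifts (a₀ := (⟨x₀, hx₀⟩ : A))
    ⟨fun x : A => f x, continuousOn_iff_continuous_domRestrict.mp hf⟩
    (Complex.exp_log (hf0 x₀ hx₀)) (fun x => hf0 x x.2) with ⟨g, ⟨-, hg⟩, -⟩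
  classical
  refine ⟨fun z => if hz : z ∈ A then g ⟨z, hz⟩ else 0, ?_, ?_⟩
  · rw [continuousOn_iff_continuous_domRestrict]
    convert! map_continuous g
    ext z
    simp
  · intro x hx
    have := congrFun hg ⟨x, hx⟩
    simp only [hx, dite_true]
    exact this

lemma hasLog_union {K₁ K₂ W : Set E3} (c₁ : IsClosed K₁) (c₂ : IsClosed K₂)
    (h₁ : HasLog (K₁ ∩ W)) (h₂ : HasLog (K₂ ∩ W)) (hp : IsPreconnected (K₁ ∩ K₂ ∩ W)) :
    HasLog ((K₁ ∪ K₂) ∩ W) := by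
  intro f hf hf0
  obtain ⟨l₁, hl₁, e₁⟩ := h₁ f (hf.mono (by gcongr; exact Set.subset_union_left))
    (fun x hx => hf0 x ⟨Or.inl hx.1, hx.2⟩)
  obtain ⟨l₂, hl₂, e₂⟩ := h₂ f (hf.mono (by gcongr; exact Set.subset_union_right))
    (fun x hx => hf0 x ⟨Or.inr hx.1, hx.2⟩)
  obtain ⟨l₃, hl₃, e₃, h13⟩ : ∃ l₃ : E3 → ℂ, ContinuousOn l₃ (K₂ ∩ W) ∧
      (∀ x ∈ K₂ ∩ W, Complex.exp (l₃ x) = f x) ∧ ∀ x ∈ K₁ ∩ K₂ ∩ W, l₁ x = l₃ x := by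
    rcases (K₁ ∩ K₂ ∩ W).eq_empty_or_nonempty with h0 | ⟨a, ha⟩
    · exact ⟨l₂, hl₂, e₂, by simp [h0]⟩
    · obtain ⟨n, hn⟩ := Complex.exp_eq_exp_iff_exists_int.1
        ((e₁ a ⟨ha.1.1, ha.2⟩).trans (e₂ a ⟨ha.1.2, ha.2⟩).symm)
      have e₃ : ∀ x ∈ K₂ ∩ W, Complex.exp (l₂ x + n * (2 * Real.pi * Complex.I)) = f x := by
        intro x hx
        rw [← e₂ x hx]
        exact Complex.exp_eq_exp_iff_exists_int.2 ⟨n, rfl⟩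
      have hc : ContinuousOn (fun x => l₂ x + n * (2 * Real.pi * Complex.I)) (K₂ ∩ W) :=
        hl₂.add continuousOn_const
      refine ⟨_, hc, e₃, ?_⟩
      exact log_unique hp (hl₁.mono fun x hx => ⟨hx.1.1, hx.2⟩)
        (hc.mono fun x hx => ⟨hx.1.2, hx.2⟩)
        (fun x hx => (e₁ x ⟨hx.1.1, hx.2⟩).trans (e₃ x ⟨hx.1.2, hx.2⟩).symm) ha hn
  classical
  let l : E3 → ℂ := fun x => if x ∈ K₁ then l₁ x else l₃ x
  have a₁ : ∀ x ∈ K₁ ∩ W, l x = l₁ x := fun x hx => if_pos hx.1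
  have a₃ : ∀ x ∈ K₂ ∩ W, l x = l₃ x := by
    intro x hx
    by_cases h : x ∈ K₁
    · exact (if_pos h).trans (h13 x ⟨⟨h, hx.1⟩, hx.2⟩)
    · exact if_neg h
  have b₁ : ContinuousOn l (K₁ ∩ W) := hl₁.congr a₁
  have b₃ : ContinuousOn l (K₂ ∩ W) := hl₃.congr a₃
  refine ⟨l, ?_, ?_⟩
  · intro x hx
    rw [Set.union_inter_distrib_right]
    refine ContinuousWithinAt.union ?_ ?_
    · by_cases h : x ∈ K₁
      · exact b₁ x ⟨h, hx.2⟩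
      · exact continuousWithinAt_of_notMem_closure
          fun h' => h (c₁.closure_subset_iff.2 Set.inter_subset_left h')
    · by_cases h : x ∈ K₂
      · exact b₃ x ⟨h, hx.2⟩
      · exact continuousWithinAt_of_notMem_closure
          fun h' => h (c₂.closure_subset_iff.2 Set.inter_subset_left h')
  · rintro x ⟨h | h, hW⟩
    · rw [a₁ x ⟨h, hW⟩, e₁ x ⟨h, hW⟩]
    · rw [a₃ x ⟨h, hW⟩, e₃ x ⟨h, hW⟩]

lemma convex_hull_sdiff {G : Set E3} {s : E3} (hs : s ∉ convexHull ℝ G) :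
    Convex ℝ (convexHull ℝ (insert s G) \ {s}) := by
  rcases G.eq_empty_or_nonempty with rfl | hne
  · simp [convex_empty]
  have key : ∀ x, x ∈ convexHull ℝ (insert s G) \ {s} ↔
      ∃ a : ℝ, 0 < a ∧ a ≤ 1 ∧ ∃ g ∈ convexHull ℝ G, x = s + a • (g - s) := by
    intro x
    rw [convexHull_insert hne, Set.mem_sdiff, mem_convexJoin]
    constructor
    · rintro ⟨⟨_, rfl, g, hg, hx⟩, hxs⟩
      rw [segment_eq_image'] at hx
      obtain ⟨a, ha, rfl⟩ := hx
      refine ⟨a, lt_of_le_of_ne ha.1 ?_, ha.2, g, hg, rfl⟩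
      rintro rfl
      simp at hxs
    · rintro ⟨a, ha, ha1, g, hg, rfl⟩
      refine ⟨⟨s, rfl, g, hg, ?_⟩, ?_⟩
      · rw [segment_eq_image']
        exact ⟨a, ⟨ha.le, ha1⟩, rfl⟩
      · simp only [Set.mem_singleton_iff, add_eq_left, smul_eq_zero, not_or]
        refine ⟨ha.ne', fun h => hs ?_⟩
        rw [sub_eq_zero] at h
        exact h ▸ hg
  intro x hx y hy p q hp hq hpq
  rw [key] at hx hy ⊢
  obtain ⟨a, ha, ha1, g, hg, rfl⟩ := hx
  obtain ⟨b, hb, hb1, g', hg', rfl⟩ := hy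
  have hc : 0 < p * a + q * b := by
    rcases hp.eq_or_lt with rfl | hp'
    · have : q = 1 := by linarith
      subst this; simpa using hb
    · have := mul_nonneg hq hb.le
      have := mul_pos hp' ha
      linarith
  refine ⟨p * a + q * b, hc, by nlinarith, (p * a / (p * a + q * b)) • g +
    (q * b / (p * a + q * b)) • g', ?_, ?_⟩
  · refine (convex_convexHull ℝ G) hg hg' (by positivity) (by positivity) ?_
    field_simp
  · have hq' : q = 1 - p := by linarith
    simp only [smul_sub, smul_add, smul_smul, mul_div_cancel₀ _ hc.ne', add_smul]
    subst hq'
    module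

lemma not_hasLog_sphere {X : Set E3} (h : X ≃ₜ (Metric.sphere (0 : E3) 1 : Set E3))
    {s : E3} (hs : s ∈ X) : ∃ r₀ > 0, ∀ r > 0, r ≤ r₀ →
      ¬ HasLog (X ∩ (Metric.ball s r \ {s})) := by
  have : Fact (Module.finrank ℝ E3 = 2 + 1) := ⟨by simp [E3]⟩
  set v : (Metric.sphere (0 : E3) 1 : Set E3) := -(h ⟨s, hs⟩) with hv
  have hvs : h ⟨s, hs⟩ ≠ v := by
    intro h0
    have h1 := congrArg Subtype.val h0
    have h2 : (h ⟨s, hs⟩ : E3) = -(h ⟨s, hs⟩ : E3) := h1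
    have h3 : (h ⟨s, hs⟩ : E3) = 0 := by
      have h5 : (2 : ℝ) • (h ⟨s, hs⟩ : E3) = 0 := by
        rw [two_smul]
        exact add_eq_zero_iff_eq_neg.2 h2
      exact (smul_eq_zero.1 h5).resolve_left two_ne_zero
    have h4 := (h ⟨s, hs⟩).2
    rw [h3] at h4
    simp at h4
  have hne : (h.symm v : E3) ≠ s := by
    intro h0
    apply hvs
    have : h.symm v = ⟨s, hs⟩ := Subtype.ext h0
    rw [← this]; simp
  refine ⟨dist (h.symm v : E3) s, dist_pos.2 hne, ?_⟩
  intro r hr hr0 hlog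
  let e := stereographic' 2 v
  have hes : e.source = {v}ᶜ := stereographic'_source v
  have het : e.target = Set.univ := stereographic'_target v
  let ι := Complex.orthonormalBasisOneI.repr
  let c : ℂ := ι.symm (e (h ⟨s, hs⟩))
  let f' : X → ℂ := fun x => ι.symm (e (h x)) - c
  classical
  let f : E3 → ℂ := fun x => if hx : x ∈ X then f' ⟨x, hx⟩ else 0
  let γ : ℂ → X := fun z => h.symm (e.symm (ι (z + c)))
  have hγc : Continuous γ := by
    have : Continuous e.symm := by
      have := e.symm.continuousOn
      rwa [e.symm_source, het, continuousOn_univ] at this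
    fun_prop
  have hγ0 : γ 0 = ⟨s, hs⟩ := by
    simp only [γ, c, zero_add, LinearIsometryEquiv.apply_symm_apply]
    rw [e.left_inv (by rw [hes]; exact hvs)]
    simp
  have hfγ : ∀ z, f (γ z) = z := by
    intro z
    simp only [f, Subtype.coe_prop, dite_true, f', γ, Subtype.coe_eta, h.apply_symm_apply]
    rw [e.right_inv (by rw [het]; trivial)]
    simp
  have hxv : ∀ x (hx : x ∈ X ∩ (Metric.ball s r \ {s})), h ⟨x, hx.1⟩ ≠ v := by
    intro x hx h0
    have h1 : x = h.symm v := by rw [← h0]; simp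
    have := hx.2.1
    rw [Metric.mem_ball, h1] at this
    linarith
  obtain ⟨l, hl, hle⟩ := hlog f (by
    rw [continuousOn_iff_continuous_domRestrict]
    have : Continuous fun x : ↥(X ∩ (Metric.ball s r \ {s})) => f' ⟨x, x.2.1⟩ := by
      have : Continuous fun x : ↥(X ∩ (Metric.ball s r \ {s})) => e (h ⟨x, x.2.1⟩) := by
        refine e.continuousOn.comp_continuous (by fun_prop) fun x => ?_
        rw [hes]
        exact hxv x x.2
      exact (ι.symm.continuous.comp this).sub continuous_const
    convert! this using 1
    ext x
    simp [f, x.2.1]) (by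
    intro x hx h0
    simp only [f, hx.1, dite_true, f', c, sub_eq_zero] at h0
    have h1 := ι.symm.injective h0
    have h2 := e.injOn (by rw [hes]; exact hxv x hx) (by rw [hes]; exact hvs) h1
    have h3 := congrArg Subtype.val (h.injective h2)
    exact hx.2.2 h3)
  have hγs : Filter.Tendsto (fun z => (γ z : E3)) (nhds 0) (nhds s) := by
    have : Continuous fun z => (γ z : E3) := by fun_prop
    have := this.tendsto 0
    rwa [hγ0] at this
  obtain ⟨δ, hδ, hδr⟩ := Metric.tendsto_nhds_nhds.1 hγs r hr
  let w : ℝ → ℂ := fun θ => (δ / 2 : ℝ) * Complex.exp (θ * Complex.I)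
  have hw0 : ∀ θ, w θ ≠ 0 := by
    intro θ
    simp only [w]
    exact mul_ne_zero (by exact_mod_cast (half_pos hδ).ne') (Complex.exp_ne_zero _)
  have hwm : ∀ θ, (γ (w θ) : E3) ∈ X ∩ (Metric.ball s r \ {s}) := by
    intro θ
    refine ⟨(γ (w θ)).2, hδr ?_, ?_⟩
    · rw [dist_zero_right]
      simp only [w, norm_mul, Complex.norm_exp_ofReal_mul_I, Complex.norm_real]
      rw [Real.norm_of_nonneg (by positivity)]
      linarith
    · intro h0
      have h1 : γ (w θ) = γ 0 := by rw [hγ0]; exact Subtype.ext h0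
      have h2 := hfγ (w θ)
      rw [h1, hfγ] at h2
      exact hw0 θ h2.symm
  have hwc : Continuous w := by fun_prop
  have hlc : Continuous fun θ => l (γ (w θ)) :=
    hl.comp_continuous (by fun_prop) hwm
  have hexp : ∀ θ, Complex.exp (l (γ (w θ))) = w θ := fun θ => by rw [hle _ (hwm θ), hfγ]
  have hw2 : w (2 * Real.pi) = w 0 := by simp [w]
  have := log_unique (isPreconnected_univ (α := ℝ)) (l₁ := fun θ => l (γ (w θ)))
    (l₂ := fun θ => l (γ (w 0)) + θ * Complex.I) hlc.continuousOn
    (by fun_prop) (by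
      intro θ _
      rw [hexp, Complex.exp_add, hexp]
      simp [w]) (Set.mem_univ 0) (by simp) (2 * Real.pi) (Set.mem_univ _)
  rw [hw2] at this
  simp at this

lemma notMem_hull (L : SimplicialComplex ℝ E3) {s : E3} (hs : ({s} : Finset E3) ∈ L.faces)
    {F : Finset E3} (hF : F ∈ L.faces) (hsF : s ∉ F) : s ∉ convexHull ℝ (F : Set E3) := by
  intro h
  have h1 := L.inter_subset_convexHull hs hF ⟨subset_convexHull ℝ _ (by simp), h⟩
  have h2 : (({s} : Finset E3) : Set E3) ∩ (F : Set E3) = ∅ := by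
    ext x
    simp only [Finset.coe_singleton, Set.mem_inter_iff, Set.mem_singleton_iff, Finset.mem_coe,
      Set.mem_empty_iff_false, iff_false, not_and]
    rintro rfl
    exact hsF
  rw [h2] at h1
  simp at h1

lemma convex_face_inter (L : SimplicialComplex ℝ E3) {s : E3}
    {F : Finset E3} (hF : F ∈ L.faces) (hsF : s ∈ F) (r : ℝ) :
    Convex ℝ (convexHull ℝ (F : Set E3) ∩ (Metric.ball s r \ {s})) := by
  have hs : ({s} : Finset E3) ∈ L.faces := L.down_closed hF (by simpa) (by simp)
  have h1 : s ∉ convexHull ℝ ((F.erase s : Finset E3) : Set E3) := by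
    rcases (F.erase s).eq_empty_or_nonempty with h0 | h0
    · rw [h0]; simp
    · exact notMem_hull L hs (L.down_closed hF (Finset.erase_subset _ _) h0) (by simp)
  have h2 := convex_hull_sdiff h1
  rw [← Finset.coe_insert, Finset.insert_erase hsF] at h2
  have h3 : convexHull ℝ (F : Set E3) ∩ (Metric.ball s r \ {s}) =
      (convexHull ℝ (F : Set E3) \ {s}) ∩ Metric.ball s r := by
    ext x
    simp only [Set.mem_inter_iff, Set.mem_sdiff]
    tauto
  rw [h3]
  exact h2.inter (convex_ball s r)

lemma hull_closed (F : Finset E3) : IsClosed (convexHull ℝ (F : Set E3)) :=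
  (F.finite_toSet.isCompact_convexHull (𝕜 := ℝ)).isClosed

lemma exists_max_face (L : SimplicialComplex ℝ E3) {s a b c : E3} (hab : a ≠ b)
    (hcb : c ≠ b) (hsb : s ≠ b) (hv : linkVerts L s = {a, b, c}) :
    ∃ F₀ ∈ L.faces, s ∈ F₀ ∧ b ∉ F₀ ∧
      ∀ F ∈ L.faces, s ∈ F → a ∈ F → b ∉ F → F ⊆ F₀ := by
  have hF : ∀ F ∈ L.faces, s ∈ F → b ∉ F → ∀ x ∈ F, x = s ∨ x = a ∨ x = c := by
    intro F hF hsF hbF x hx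
    by_cases hxs : x = s
    · exact Or.inl hxs
    · have : x ∈ linkVerts L s := by
        refine ⟨hxs, L.down_closed hF ?_ (by simp)⟩
        intro y hy
        simp only [Finset.mem_insert, Finset.mem_singleton] at hy
        rcases hy with rfl | rfl <;> assumption
      rw [hv] at this
      rcases this with h | h | h
      · exact Or.inr (Or.inl h)
      · exact absurd (h ▸ hx) hbF
      · exact Or.inr (Or.inr h)
  by_cases h : ({s, a, c} : Finset E3) ∈ L.faces
  · refine ⟨_, h, by simp, by simp [hab.symm, hcb.symm, hsb.symm], ?_⟩
    intro F h1 h2 _ h3 x hx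
    simpa using hF F h1 h2 h3 x hx
  · have ha : a ∈ linkVerts L s := by rw [hv]; simp
    refine ⟨_, ha.2, by simp, by simp [hab.symm, hsb.symm], ?_⟩
    intro F h1 h2 h4 h3 x hx
    rcases hF F h1 h2 h3 x hx with h5 | h5 | h5
    · simp [h5]
    · simp [h5]
    · exfalso
      apply h
      refine L.down_closed h1 ?_ (by simp)
      intro y hy
      simp only [Finset.mem_insert, Finset.mem_singleton] at hy
      rcases hy with rfl | rfl | rfl
      · exact h2
      · exact h4
      · exact h5 ▸ hx

/-- In a triangulated 2-sphere a vertex of valence three is joined to every pair of its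
neighbours by a triangle. -/
lemma triangle_mem (L : SimplicialComplex ℝ E3) (hfin : L.faces.Finite)
    (hsph : Nonempty (L.space ≃ₜ (Metric.sphere (0 : E3) 1 : Set E3)))
    {s a b c : E3} (hab : a ≠ b) (hbc : b ≠ c) (hac : a ≠ c)
    (hs : ({s} : Finset E3) ∈ L.faces) (hv : linkVerts L s = {a, b, c}) :
    ({s, a, b} : Finset E3) ∈ L.faces := by
  by_contra hno
  obtain ⟨h⟩ := hsph
  have ha : a ∈ linkVerts L s := by rw [hv]; simp
  have hb : b ∈ linkVerts L s := by rw [hv]; simp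
  have hc : c ∈ linkVerts L s := by rw [hv]; simp
  obtain ⟨F₀, f₀, s₀, b₀, m₀⟩ := exists_max_face L hab hbc.symm hb.1.symm hv
  obtain ⟨F₁, f₁, s₁, a₁, m₁⟩ := exists_max_face L (a := b) (b := a) (c := c) hab.symm
    hac.symm ha.1.symm (by rw [hv, Set.insert_comm])
  have fC : ({s, c} : Finset E3) ∈ L.faces := hc.2
  have sC : s ∈ ({s, c} : Finset E3) := by simp
  have hvert : ∀ F ∈ L.faces, s ∈ F → ∀ x ∈ F, x = s ∨ x = a ∨ x = b ∨ x = c := by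
    intro F hF hsF x hx
    by_cases hxs : x = s
    · exact Or.inl hxs
    · have : x ∈ linkVerts L s := by
        refine ⟨hxs, L.down_closed hF ?_ (by simp)⟩
        intro y hy
        simp only [Finset.mem_insert, Finset.mem_singleton] at hy
        rcases hy with rfl | rfl <;> assumption
      rw [hv] at this
      exact Or.inr this
  have hcover : ∀ F ∈ L.faces, s ∈ F → F ⊆ F₀ ∨ F ⊆ {s, c} ∨ F ⊆ F₁ := by
    intro F hF hsF
    by_cases haF : a ∈ F
    · by_cases hbF : b ∈ F
      · refine absurd (L.down_closed hF ?_ (by simp)) hno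
        intro y hy
        simp only [Finset.mem_insert, Finset.mem_singleton] at hy
        rcases hy with rfl | rfl | rfl <;> assumption
      · exact Or.inl (m₀ F hF hsF haF hbF)
    · by_cases hbF : b ∈ F
      · exact Or.inr (Or.inr (m₁ F hF hsF hbF haF))
      · refine Or.inr (Or.inl ?_)
        intro x hx
        rcases hvert F hF hsF x hx with h | h | h | h
        · simp [h]
        · exact absurd (h ▸ hx) haF
        · exact absurd (h ▸ hx) hbF
        · simp [h]
  have hsX : s ∈ L.space := L.subset_space hs (by simp)
  obtain ⟨r₀, hr₀, hr⟩ := not_hasLog_sphere h hsX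
  -- the faces away from `s`
  let K : Set E3 := ⋃ F ∈ {F | F ∈ L.faces ∧ s ∉ F}, convexHull ℝ (F : Set E3)
  have hK : IsClosed K := (hfin.subset (fun F hF => hF.1)).isClosed_biUnion
    fun F _ => hull_closed F
  have hsK : s ∉ K := by
    simp only [K, Set.mem_iUnion, not_exists]
    intro F hF
    exact notMem_hull L hs hF.1 hF.2
  obtain ⟨ε, hε, hεK⟩ := Metric.isOpen_iff.1 hK.isOpen_compl s hsK
  set r := min r₀ ε with hrdef
  refine hr r (lt_min hr₀ hε) (min_le_left _ _) ?_
  have hsp : L.space ∩ (Metric.ball s r \ {s}) =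
      ((convexHull ℝ (F₀ : Set E3) ∪ convexHull ℝ ((({s, c} : Finset E3)) : Set E3)) ∪
        convexHull ℝ (F₁ : Set E3)) ∩ (Metric.ball s r \ {s}) := by
    ext x
    constructor
    · rintro ⟨hx, hW⟩
      refine ⟨?_, hW⟩
      obtain ⟨F, hF, hxF⟩ := SimplicialComplex.mem_space_iff.1 hx
      have hsF : s ∈ F := by
        by_contra hsF
        refine hεK (Metric.ball_subset_ball (min_le_right _ _) hW.1) ?_
        simp only [K, Set.mem_iUnion]
        exact ⟨F, ⟨hF, hsF⟩, hxF⟩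
      rcases hcover F hF hsF with h | h | h
      · exact Or.inl (Or.inl (convexHull_mono (Finset.coe_subset.2 h) hxF))
      · exact Or.inl (Or.inr (convexHull_mono (Finset.coe_subset.2 h) hxF))
      · exact Or.inr (convexHull_mono (Finset.coe_subset.2 h) hxF)
    · rintro ⟨(hx | hx) | hx, hW⟩
      · exact ⟨L.convexHull_subset_space f₀ hx, hW⟩
      · exact ⟨L.convexHull_subset_space fC hx, hW⟩
      · exact ⟨L.convexHull_subset_space f₁ hx, hW⟩
  rw [hsp]
  have hint : ∀ F ∈ L.faces, ∀ G ∈ L.faces,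
      convexHull ℝ (F : Set E3) ∩ convexHull ℝ (G : Set E3) =
        convexHull ℝ ((F ∩ G : Finset E3) : Set E3) := by
    intro F hF G hG
    rw [L.convexHull_inter_convexHull hF hG, Finset.coe_inter]
  have hpre : ∀ F ∈ L.faces, ∀ G ∈ L.faces, s ∈ F → s ∈ G →
      IsPreconnected (convexHull ℝ (F : Set E3) ∩ convexHull ℝ (G : Set E3) ∩
        (Metric.ball s r \ {s})) := by
    intro F hF G hG hsF hsG
    rw [hint F hF G hG]
    have hsFG : s ∈ F ∩ G := Finset.mem_inter.2 ⟨hsF, hsG⟩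
    exact (convex_face_inter L (L.down_closed hF Finset.inter_subset_left ⟨s, hsFG⟩)
      hsFG r).isPreconnected
  refine hasLog_union ((hull_closed _).union (hull_closed _)) (hull_closed _)
    (hasLog_union (hull_closed _) (hull_closed _) (hasLog_of_convex (convex_face_inter L f₀ s₀ r))
      (hasLog_of_convex (convex_face_inter L fC sC r)) (hpre _ f₀ _ fC s₀ sC))
    (hasLog_of_convex (convex_face_inter L f₁ s₁ r)) ?_
  have h01 : convexHull ℝ (F₀ : Set E3) ∩ convexHull ℝ (F₁ : Set E3) ⊆
      convexHull ℝ ((({s, c} : Finset E3)) : Set E3) ∩ convexHull ℝ (F₁ : Set E3) := by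
    rw [hint _ f₀ _ f₁, hint _ fC _ f₁]
    refine convexHull_mono (Finset.coe_subset.2 ?_)
    intro x hx
    rw [Finset.mem_inter] at hx ⊢
    refine ⟨?_, hx.2⟩
    rcases hvert F₀ f₀ s₀ x hx.1 with h | h | h | h
    · simp [h]
    · exact absurd (h ▸ hx.2) a₁
    · exact absurd (h ▸ hx.1) b₀
    · simp [h]
  rw [Set.union_inter_distrib_right, Set.union_eq_self_of_subset_left h01]
  exact hpre _ fC _ f₁ sC s₁

/-- If `L` is a metric flag labeled triangulation of the 2-sphere which is not
the boundary of a 3-simplex and `s` is a 3-Euclidean vertex, then the link and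
the closed star of `s` are full subcomplexes of `L`. -/
theorem link_and_star_full_of_threeEuclidean
    (L : SimplicialComplex ℝ E3) (m : E3 → E3 → ℕ)
    (hL : IsLabeledS2 L m) (hflag : MetricFlag L m)
    (hnot : ¬ IsBoundaryOfThreeSimplex L)
    (s : E3) (hs : IsThreeEuclidean L m s) :
    IsFullSubcomplex L (link L s) ∧ IsFullSubcomplex L (star L s) := by
  obtain ⟨hsf, a, b, c, hab, hbc, hac, hv, hsum⟩ := hs
  have tab := triangle_mem L hL.finite hL.sphere hab hbc hac hsf hv
  have tbc := triangle_mem L hL.finite hL.sphere (a := b) (b := c) (c := a) hbc hac.symm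
    hab.symm hsf (by rw [hv]; ext x; simp only [Set.mem_insert_iff, Set.mem_singleton_iff]; tauto)
  have tac := triangle_mem L hL.finite hL.sphere (a := a) (b := c) (c := b) hac hbc.symm
    hab hsf (by rw [hv]; ext x; simp only [Set.mem_insert_iff, Set.mem_singleton_iff]; tauto)
  have tabc : ({a, b, c} : Finset E3) ∉ L.faces := by
    intro h
    have e1 : ({a, b} : Finset E3) ∈ L.faces := L.down_closed h (by intro x; simp; tauto) (by simp)
    have e2 : ({b, c} : Finset E3) ∈ L.faces := L.down_closed h (by intro x; simp; tauto) (by simp)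
    have e3 : ({a, c} : Finset E3) ∈ L.faces := L.down_closed h (by intro x; simp; tauto) (by simp)
    have := (hflag a b c hab hbc hac e1 e2 e3).1 h
    linarith
  -- a face spanned by neighbours of `s` can be coned off
  have key : ∀ F ∈ L.faces, (∀ v ∈ F, v = a ∨ v = b ∨ v = c) → insert s F ∈ L.faces := by
    intro F hF hFv
    by_cases ha : a ∈ F
    · by_cases hb : b ∈ F
      · by_cases hc : c ∈ F
        · refine absurd (L.down_closed hF ?_ (by simp)) tabc
          intro x hx
          simp only [Finset.mem_insert, Finset.mem_singleton] at hx
          rcases hx with rfl | rfl | rfl <;> assumption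
        · refine L.down_closed tab (Finset.insert_subset_insert _ ?_) (by simp)
          intro x hx
          rcases hFv x hx with rfl | rfl | rfl <;> simp_all
      · refine L.down_closed tac (Finset.insert_subset_insert _ ?_) (by simp)
        intro x hx
        rcases hFv x hx with rfl | rfl | rfl <;> simp_all
    · refine L.down_closed tbc (Finset.insert_subset_insert _ ?_) (by simp)
      intro x hx
      rcases hFv x hx with rfl | rfl | rfl <;> simp_all
  have hnb : ∀ v, v ≠ s → ({s, v} : Finset E3) ∈ L.faces → v = a ∨ v = b ∨ v = c := by
    intro v h1 h2
    have : v ∈ linkVerts L s := ⟨h1, h2⟩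
    rw [hv] at this
    exact this
  refine ⟨⟨fun F hF => hF.1, ?_⟩, ⟨fun F hF => hF.1, ?_⟩⟩
  · intro F hF hFv
    have hsF : s ∉ F := fun h => (hFv s h).2.1 (by simp)
    refine ⟨hF, hsF, key F hF fun v hvF => hnb v ?_ (hFv v hvF).2.2⟩
    rintro rfl
    exact hsF hvF
  · intro F hF hFv
    by_cases hsF : s ∈ F
    · exact ⟨hF, F, hF, hsF, subset_rfl⟩
    · refine ⟨hF, insert s F, key F hF fun v hvF => hnb v ?_ ?_, by simp, by simp⟩
      · rintro rfl
        exact hsF hvF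
      · obtain ⟨-, G, hG, hsG, hvG⟩ := hFv v hvF
        refine L.down_closed hG ?_ (by simp)
        intro y hy
        simp only [Finset.mem_insert, Finset.mem_singleton] at hy
        rcases hy with rfl | rfl
        · exact hsG
        · exact hvG (by simp)
end

section
/- Suppose L is a metric flag labeled triangulation of the 2-sphere that is not the suspension of a 3-gon. If s is a 4-Euclidean vertex of L, then both the link L_s and the closed star St_L(s) are full subcomplexes of L. -/
open Geometry

open CoxOrb

/-! ### Auxiliary results -/

namespace CoxOrb

/-- Borsuk-Ulam in dimension two, for the punctured space `ℂ × ℝ`. -/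
theorem borsukUlam_aux (F : {x : ℂ × ℝ // x ≠ 0} → ℂ) (hF : Continuous F) :
    ∃ x y : {x : ℂ × ℝ // x ≠ 0}, (y : ℂ × ℝ) = -x ∧ F x = F y := by
  by_contra! hne
  have hφ : ∀ z : ℂ, ((z, 1 - ‖z‖ ^ 2) : ℂ × ℝ) ≠ 0 := by
    intro z h
    simp only [Prod.mk_eq_zero] at h
    obtain ⟨rfl, h⟩ := h
    simp at h
  have hφ' : ∀ z : ℂ, ((-z, -(1 - ‖z‖ ^ 2)) : ℂ × ℝ) ≠ 0 := by
    intro z h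
    apply hφ z
    have := congrArg Neg.neg h
    simpa using this
  let G : C(ℂ, ℂ) := ⟨fun z => F ⟨(z, 1 - ‖z‖ ^ 2), hφ z⟩ - F ⟨(-z, -(1 - ‖z‖ ^ 2)), hφ' z⟩, by
    refine (hF.comp ?_).sub (hF.comp ?_)
    · exact Continuous.subtype_mk (by fun_prop) _
    · exact Continuous.subtype_mk (by fun_prop) _⟩
  have hG0 : ∀ z, G z ≠ 0 := by
    intro z
    exact sub_ne_zero.2 (hne _ _ (by simp))
  have hGodd : ∀ z : ℂ, ‖z‖ = 1 → G (-z) = - G z := by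
    intro z hz
    simp [G, hz]
  obtain ⟨H, ⟨-, hH⟩, -⟩ := Complex.isCoveringMapOn_exp.existsUnique_continuousMap_lifts G
    (a₀ := 0) (Complex.exp_log (hG0 0)) (fun z => by simpa using hG0 z)
  have hH' : ∀ z, Complex.exp (H z) = G z := fun z => congrFun hH z
  let γ : ℝ → ℂ := fun θ => Complex.exp (θ * Complex.I)
  have hγ : ∀ θ, ‖γ θ‖ = 1 := fun θ => Complex.norm_exp_ofReal_mul_I θ
  let D : ℝ → ℝ := fun θ => (H (-γ θ) - H (γ θ)).im
  have hD : Continuous D := by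
    have : Continuous γ := by fun_prop
    fun_prop
  have hDπ : D Real.pi = - D 0 := by
    simp [D, γ]
  have hexp : ∀ θ, Complex.exp (H (-γ θ) - H (γ θ)) = -1 := by
    intro θ
    rw [Complex.exp_sub, hH', hH', hGodd _ (hγ θ), neg_div, div_self (hG0 _)]
  obtain ⟨θ, hθ⟩ : ∃ θ, D θ = 0 := by
    rcases le_total (D 0) 0 with h | h
    · exact mem_range_of_exists_le_of_exists_ge hD ⟨0, h⟩ ⟨Real.pi, by linarith⟩
    · exact mem_range_of_exists_le_of_exists_ge hD ⟨Real.pi, by linarith⟩ ⟨0, h⟩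
  have h1 := congrArg Complex.re (hexp θ)
  rw [Complex.exp_re] at h1
  change _ * Real.cos (D θ) = _ at h1
  rw [hθ] at h1
  simp at h1
  have := Real.exp_pos ((H (-γ θ)).re - (H (γ θ)).re)
  linarith

/-- A map from the punctured space to the sphere that separates antipodes is onto. -/
theorem surj_of_sep (f : {x : ℂ × ℝ // x ≠ 0} → (Metric.sphere (0 : E3) 1 : Set E3))
    (hf : Continuous f)
    (hsep : ∀ x y : {x : ℂ × ℝ // x ≠ 0}, (y : ℂ × ℝ) = -x → f x ≠ f y) :
    Function.Surjective f := by
  intro q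
  by_contra! hq
  have : Fact (Module.finrank ℝ E3 = 2 + 1) := ⟨by simp⟩
  let σ := stereographic' 2 q
  have hsrc : ∀ x, f x ∈ σ.source := by
    intro x
    rw [stereographic'_source]
    exact hq x
  let ψ : EuclideanSpace ℝ (Fin 2) → ℂ := fun v => ⟨v 0, v 1⟩
  have hψ : Continuous ψ := by
    have : ψ = fun v => (v 0 : ℂ) + (v 1 : ℂ) * Complex.I := by
      funext v
      apply Complex.ext <;> simp [ψ]
    rw [this]
    fun_prop
  have hψi : Function.Injective ψ := by
    intro v w h
    have h0 := congrArg Complex.re h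
    have h1 := congrArg Complex.im h
    ext i
    fin_cases i
    · exact h0
    · exact h1
  have hc : Continuous fun x => ψ (σ (f x)) :=
    hψ.comp (σ.continuousOn.comp_continuous hf hsrc)
  obtain ⟨x, y, hxy, h⟩ := borsukUlam_aux _ hc
  exact hsep x y hxy (σ.injOn (hsrc x) (hsrc y) (hψi h))

theorem bary_aux (L : SimplicialComplex ℝ E3) {ι : Type} [Fintype ι] [DecidableEq ι]
    (p : ι → E3) (hp : Function.Injective p) (S : Finset ι) (hS : S.image p ∈ L.faces)
    (c c' : ι → ℝ) (hc : ∀ i, i ∉ S → c i = 0) (hc' : ∀ i, i ∉ S → c' i = 0)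
    (h1 : ∑ i, c i = ∑ i, c' i) (h2 : ∑ i, c i • p i = ∑ i, c' i • p i) : c = c' := by
  let emb : S ↪ (S.image p : Finset E3) :=
    ⟨fun i : S => ⟨p i, Finset.mem_image_of_mem p i.2⟩, fun i j h =>
      Subtype.ext (hp (congrArg Subtype.val h))⟩
  have hind : AffineIndependent ℝ (fun i : S => p i) := by
    have h := AffineIndependent.comp_embedding emb (L.indep hS)
    exact h
  have e1 : ∑ i : S, (c i - c' i) = 0 := by
    rw [Finset.sum_coe_sort S (fun i => c i - c' i),
      Finset.sum_subset (Finset.subset_univ S) (fun i _ hi => by rw [hc i hi, hc' i hi, sub_self]),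
      Finset.sum_sub_distrib, h1, sub_self]
  have e2 : ∑ i : S, (c i - c' i) • p i = 0 := by
    rw [Finset.sum_coe_sort S (fun i => (c i - c' i) • p i),
      Finset.sum_subset (Finset.subset_univ S)
        (fun i _ hi => by rw [hc i hi, hc' i hi, sub_self, zero_smul])]
    simp only [sub_smul]
    rw [Finset.sum_sub_distrib, h2, sub_self]
  have h := hind.eq_zero_of_sum_eq_zero (w := fun i : S => c i - c' i) e1 e2
  funext i
  by_cases hi : i ∈ S
  · exact sub_eq_zero.1 (h ⟨i, hi⟩ (Finset.mem_univ _))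
  · rw [hc i hi, hc' i hi]

theorem mem_hull_of_weights {ι : Type} [Fintype ι] [DecidableEq ι]
    (p : ι → E3) (S : Finset ι)
    (c : ι → ℝ) (hc : ∀ i, i ∉ S → c i = 0) (h0 : ∀ i, 0 ≤ c i) (h1 : ∑ i, c i = 1) :
    ∑ i, c i • p i ∈ convexHull ℝ ((S.image p : Finset E3) : Set E3) := by
  rw [← Finset.sum_subset (Finset.subset_univ S) (fun i _ hi => by rw [hc i hi, zero_smul])]
  rw [← Finset.sum_subset (Finset.subset_univ S) (fun i _ hi => hc i hi)] at h1
  exact (convex_convexHull ℝ _).sum_mem (fun i _ => h0 i) h1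
    (fun i hi => subset_convexHull ℝ _ (by
      exact_mod_cast Finset.mem_image_of_mem p hi))

/-- Uniqueness of barycentric coordinates in a simplicial complex. -/
theorem bary_unique (L : SimplicialComplex ℝ E3) {ι : Type} [Fintype ι] [DecidableEq ι]
    (p : ι → E3) (hp : Function.Injective p) (S S' : Finset ι)
    (hS : S.image p ∈ L.faces) (hS' : S'.image p ∈ L.faces)
    (c c' : ι → ℝ) (hc : ∀ i, i ∉ S → c i = 0) (hc' : ∀ i, i ∉ S' → c' i = 0)
    (h0 : ∀ i, 0 ≤ c i) (h0' : ∀ i, 0 ≤ c' i)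
    (h1 : ∑ i, c i = 1) (h1' : ∑ i, c' i = 1)
    (h2 : ∑ i, c i • p i = ∑ i, c' i • p i) : c = c' := by
  have hm := L.inter_subset_convexHull hS hS'
    ⟨mem_hull_of_weights p S c hc h0 h1, h2 ▸ mem_hull_of_weights p S' c' hc' h0' h1'⟩
  rw [← Finset.coe_inter, ← Finset.image_inter _ _ hp, Finset.mem_convexHull'] at hm
  obtain ⟨w, -, hw1, hw2⟩ := hm
  rw [Finset.sum_image (fun i _ j _ h => hp h)] at hw1 hw2
  let u : ι → ℝ := fun i => if i ∈ S ∩ S' then w (p i) else 0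
  have hu : ∀ i, i ∉ S ∩ S' → u i = 0 := fun i hi => by simp only [u, if_neg hi]
  have hu1 : ∑ i, u i = 1 := by
    rw [← hw1, ← Finset.sum_subset (Finset.subset_univ (S ∩ S')) (fun i _ hi => hu i hi)]
    exact Finset.sum_congr rfl (fun i hi => by simp only [u, if_pos hi])
  have hu2 : ∑ i, u i • p i = ∑ i, c i • p i := by
    rw [← hw2, ← Finset.sum_subset (Finset.subset_univ (S ∩ S'))
      (fun i _ hi => by rw [hu i hi, zero_smul])]
    exact Finset.sum_congr rfl (fun i hi => by simp only [u, if_pos hi])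
  have e1 : u = c := bary_aux L p hp S hS u c
    (fun i hi => hu i (fun h => hi (Finset.mem_inter.1 h).1)) hc (hu1.trans h1.symm) hu2
  have e2 : u = c' := bary_aux L p hp S' hS' u c'
    (fun i hi => hu i (fun h => hi (Finset.mem_inter.1 h).2)) hc' (hu1.trans h1'.symm)
    (hu2.trans h2)
  exact e1.symm.trans e2

/-- Unnormalised weights of the triangular bipyramid. -/
noncomputable def wt (x : ℂ × ℝ) : Fin 5 → ℝ :=
  ![x.1.re - min (min x.1.re x.1.im) 0, x.1.im - min (min x.1.re x.1.im) 0,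
    - min (min x.1.re x.1.im) 0, max x.2 0, max (-x.2) 0]

theorem wt_nonneg (x : ℂ × ℝ) (i : Fin 5) : 0 ≤ wt x i := by
  fin_cases i <;> simp [wt]

theorem wt_zero (x : ℂ × ℝ) : ∃ i : Fin 5, ∃ k : Fin 5, (i = 0 ∨ i = 1 ∨ i = 2) ∧
    (k = 3 ∨ k = 4) ∧ wt x i = 0 ∧ wt x k = 0 := by
  have hk : ∃ k : Fin 5, (k = 3 ∨ k = 4) ∧ wt x k = 0 := by
    rcases le_total x.2 0 with h | h
    · exact ⟨3, by simp, by simp [wt, h]⟩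
    · exact ⟨4, by simp, by simp [wt, h]⟩
  have hi : ∃ i : Fin 5, (i = 0 ∨ i = 1 ∨ i = 2) ∧ wt x i = 0 := by
    rcases min_choice (min x.1.re x.1.im) 0 with h | h
    · rcases min_choice x.1.re x.1.im with h' | h'
      · exact ⟨0, by simp, by rw [show wt x 0 = x.1.re - min (min x.1.re x.1.im) 0 from rfl, h, h', sub_self]⟩
      · exact ⟨1, by simp, by rw [show wt x 1 = x.1.im - min (min x.1.re x.1.im) 0 from rfl, h, h', sub_self]⟩
    · exact ⟨2, by simp, by simp only [wt, h]; simp⟩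
  obtain ⟨k, hk, hk'⟩ := hk
  obtain ⟨i, hi, hi'⟩ := hi
  exact ⟨i, k, hi, hk, hi', hk'⟩

theorem wt_sum_pos (x : ℂ × ℝ) (hx : x ≠ 0) : 0 < ∑ i, wt x i := by
  refine lt_of_le_of_ne (Finset.sum_nonneg fun i _ => wt_nonneg x i) fun h => hx ?_
  have hz := (Finset.sum_eq_zero_iff_of_nonneg (fun i _ => wt_nonneg x i)).1 h.symm
  have h0 : wt x 0 = 0 := hz 0 (Finset.mem_univ _)
  have h1 : wt x 1 = 0 := hz 1 (Finset.mem_univ _)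
  have h2 : wt x 2 = 0 := hz 2 (Finset.mem_univ _)
  have h3 : wt x 3 = 0 := hz 3 (Finset.mem_univ _)
  have h4 : wt x 4 = 0 := hz 4 (Finset.mem_univ _)
  simp only [wt, Matrix.cons_val] at h0 h1 h2 h3 h4
  have h5 := max_eq_right_iff.1 h3
  have h6 := max_eq_right_iff.1 h4
  refine Prod.ext (Complex.ext ?_ ?_) ?_ <;> simp <;> linarith

theorem wt_continuous (i : Fin 5) : Continuous fun x => wt x i := by
  fin_cases i <;> simp [wt] <;> fun_prop

/-- If the six triangles of a triangular bipyramid lie in `L`, they cover `L.space`. -/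
theorem bipyramid_cover (L : SimplicialComplex ℝ E3)
    (hL : Nonempty (L.space ≃ₜ (Metric.sphere (0 : E3) 1 : Set E3)))
    (p : Fin 5 → E3) (hp : Function.Injective p)
    (hface : ∀ i k : Fin 5, (i = 0 ∨ i = 1 ∨ i = 2) → (k = 3 ∨ k = 4) →
      (({i, k}ᶜ : Finset (Fin 5)).image p) ∈ L.faces)
    (q : E3) (hq : q ∈ L.space) :
    ∃ i k : Fin 5, (i = 0 ∨ i = 1 ∨ i = 2) ∧ (k = 3 ∨ k = 4) ∧
      q ∈ convexHull ℝ ((({i, k}ᶜ : Finset (Fin 5)).image p : Finset E3) : Set E3) := by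
  obtain ⟨e⟩ := hL
  let c : {x : ℂ × ℝ // x ≠ 0} → Fin 5 → ℝ := fun x i => wt x i / ∑ i, wt x i
  have hc0 : ∀ x i, 0 ≤ c x i := fun x i => div_nonneg (wt_nonneg _ _) (wt_sum_pos _ x.2).le
  have hc1 : ∀ x, ∑ i, c x i = 1 := fun x => by
    simp only [c]
    rw [← Finset.sum_div, div_self (wt_sum_pos _ x.2).ne']
  have hcS : ∀ x, ∃ i k : Fin 5, (i = 0 ∨ i = 1 ∨ i = 2) ∧ (k = 3 ∨ k = 4) ∧
      ∀ j, j ∉ ({i, k}ᶜ : Finset (Fin 5)) → c x j = 0 := by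
    intro x
    obtain ⟨i, k, hi, hk, hi', hk'⟩ := wt_zero x.1
    refine ⟨i, k, hi, hk, fun j hj => ?_⟩
    simp only [Finset.mem_compl, not_not, Finset.mem_insert, Finset.mem_singleton] at hj
    rcases hj with rfl | rfl
    · simp only [c, hi', zero_div]
    · simp only [c, hk', zero_div]
  let f : {x : ℂ × ℝ // x ≠ 0} → E3 := fun x => ∑ i, c x i • p i
  have hfh : ∀ x, ∃ i k : Fin 5, (i = 0 ∨ i = 1 ∨ i = 2) ∧ (k = 3 ∨ k = 4) ∧
      f x ∈ convexHull ℝ ((({i, k}ᶜ : Finset (Fin 5)).image p : Finset E3) : Set E3) := by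
    intro x
    obtain ⟨i, k, hi, hk, h⟩ := hcS x
    exact ⟨i, k, hi, hk, mem_hull_of_weights p _ _ h (hc0 x) (hc1 x)⟩
  have hfs : ∀ x, f x ∈ L.space := by
    intro x
    obtain ⟨i, k, hi, hk, h⟩ := hfh x
    exact SimplicialComplex.convexHull_subset_space (hface i k hi hk) h
  have hfc : Continuous f := by
    refine continuous_finsetSum _ fun i _ => ?_
    suffices hci : Continuous fun x => c x i from hci.smul continuous_const
    refine Continuous.div ((wt_continuous i).comp continuous_subtype_val) ?_
      (fun x => (wt_sum_pos _ x.2).ne')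
    exact continuous_finsetSum _ fun i _ => (wt_continuous i).comp continuous_subtype_val
  have hsep : ∀ x y : {x : ℂ × ℝ // x ≠ 0}, (y : ℂ × ℝ) = -x → f x ≠ f y := by
    intro x y hxy h
    obtain ⟨i, k, hi, hk, hS⟩ := hcS x
    obtain ⟨i', k', hi', hk', hS'⟩ := hcS y
    have hcc : c x = c y := bary_unique L p hp _ _ (hface i k hi hk) (hface i' k' hi' hk')
      _ _ hS hS' (hc0 x) (hc0 y) (hc1 x) (hc1 y) h
    have hx := wt_sum_pos _ x.2
    have hy := wt_sum_pos _ y.2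
    have key : ∀ j, wt x j * ∑ i, wt y i = wt y j * ∑ i, wt x i := by
      intro j
      have := congrFun hcc j
      simp only [c] at this
      rwa [div_eq_div_iff hx.ne' hy.ne'] at this
    set A := ∑ i, wt x i
    set B := ∑ i, wt y i
    have k0 := key 0
    have k1 := key 1
    have k2 := key 2
    have k3 := key 3
    have k4 := key 4
    have m1 : ∀ t : ℝ, t * B = -t * A → t = 0 := by
      intro t ht
      have : t * (A + B) = 0 := by linarith
      exact (mul_eq_zero.1 this).resolve_right (by linarith)
    have mz : ∀ t : ℝ, max t 0 - max (-t) 0 = t := by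
      intro t
      rcases le_total t 0 with h | h
      · rw [max_eq_right h, max_eq_left (by linarith)]; ring
      · rw [max_eq_left h, max_eq_right (by linarith)]; ring
    rw [hxy] at k0 k1 k2 k3 k4
    simp only [wt, Matrix.cons_val, Prod.fst_neg, Prod.snd_neg, Complex.neg_re, Complex.neg_im,
      neg_neg] at k0 k1 k2 k3 k4
    apply x.2
    refine Prod.ext (Complex.ext ?_ ?_) ?_
    · exact m1 _ (by linear_combination k0 - k2)
    · exact m1 _ (by linear_combination k1 - k2)
    · refine m1 _ ?_
      have := mz x.1.2
      linear_combination k3 - k4 - (A + B) * this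
  have hsurj := surj_of_sep (fun x => e ⟨f x, hfs x⟩)
    (e.continuous.comp (hfc.subtype_mk _))
    (fun x y hxy h => hsep x y hxy (congrArg Subtype.val (e.injective h)))
  obtain ⟨x, hx⟩ := hsurj (e ⟨q, hq⟩)
  have hx' : f x = q := congrArg Subtype.val (e.injective hx)
  exact hx' ▸ hfh x

/-- A diagonal of the link of a 4-Euclidean vertex forces a suspension. -/
theorem susp_of_diag (L : SimplicialComplex ℝ E3) (m : E3 → E3 → ℕ)
    (hL : IsLabeledS2 L m) (hflag : MetricFlag L m) (s a b c d : E3)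
    (hnd : [b, d, s, a, c].Pairwise (· ≠ ·))
    (h1 : ({s, a, b} : Finset E3) ∈ L.faces) (h2 : ({s, b, c} : Finset E3) ∈ L.faces)
    (h3 : ({s, c, d} : Finset E3) ∈ L.faces) (h4 : ({s, d, a} : Finset E3) ∈ L.faces)
    (m1 : m a b = 2) (m2 : m b c = 2) (m3 : m c d = 2) (m4 : m d a = 2)
    (hac : ({a, c} : Finset E3) ∈ L.faces) : IsSuspensionOfThreeGon L := by
  have hnd' := hnd
  simp only [List.pairwise_cons, List.mem_cons, List.not_mem_nil, or_false, forall_eq_or_imp,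
    forall_eq, ne_eq, IsEmpty.forall_iff, implies_true, List.Pairwise.nil, and_true] at hnd'
  obtain ⟨⟨nbd, nbs, nba, nbc⟩, ⟨nds, nda, ndc⟩, ⟨nsa, nsc⟩, nac⟩ := hnd'
  have down : ∀ {F : Finset E3} (G : Finset E3), F ∈ L.faces → G ⊆ F → G.Nonempty → G ∈ L.faces :=
    fun G hF hG hn => L.down_closed hF hG hn
  have hsa : ({s, a} : Finset E3) ∈ L.faces := down _ h1 (by grind) (by simp)
  have hsc : ({s, c} : Finset E3) ∈ L.faces := down _ h2 (by grind) (by simp)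
  have hbs : ({b, s} : Finset E3) ∈ L.faces := down _ h1 (by grind) (by simp)
  have hds : ({d, s} : Finset E3) ∈ L.faces := down _ h3 (by grind) (by simp)
  have hab : ({a, b} : Finset E3) ∈ L.faces := down _ h1 (by grind) (by simp)
  have hbc : ({b, c} : Finset E3) ∈ L.faces := down _ h2 (by grind) (by simp)
  have hcd : ({c, d} : Finset E3) ∈ L.faces := down _ h3 (by grind) (by simp)
  have hda : ({d, a} : Finset E3) ∈ L.faces := down _ h4 (by grind) (by simp)
  have hmac : 0 < 1 / (m a c : ℝ) := by
    have := hL.two_le a c nac hac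
    positivity
  have habc : ({a, b, c} : Finset E3) ∈ L.faces := by
    refine (hflag a b c (Ne.symm nba) nbc nac hab hbc hac).2 ?_
    rw [m1, m2, hL.symm c a]
    norm_num
    simpa using hmac
  have hadc : ({a, d, c} : Finset E3) ∈ L.faces := by
    refine (hflag a d c (Ne.symm nda) ndc nac (by rwa [Finset.pair_comm])
      (by rwa [Finset.pair_comm]) hac).2 ?_
    rw [hL.symm a d, hL.symm d c, m3, m4, hL.symm c a]
    norm_num
    simpa using hmac
  let p : Fin 5 → E3 := ![s, a, c, b, d]
  have hp : Function.Injective p := by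
    intro i j h
    fin_cases i <;> fin_cases j <;> simp [p] at h ⊢ <;> grind
  have cover := bipyramid_cover L hL.sphere p hp (by
    rintro i k (rfl | rfl | rfl) (rfl | rfl)
    · have : (({0, 3}ᶜ : Finset (Fin 5)).image p) = {a, d, c} := by
        rw [show ({0, 3}ᶜ : Finset (Fin 5)) = {1, 4, 2} by decide]; simp [p]
      rwa [this]
    · have : (({0, 4}ᶜ : Finset (Fin 5)).image p) = {a, b, c} := by
        rw [show ({0, 4}ᶜ : Finset (Fin 5)) = {1, 3, 2} by decide]; simp [p]
      rwa [this]
    · have : (({1, 3}ᶜ : Finset (Fin 5)).image p) = {s, c, d} := by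
        rw [show ({1, 3}ᶜ : Finset (Fin 5)) = {0, 2, 4} by decide]; simp [p]
      rwa [this]
    · have : (({1, 4}ᶜ : Finset (Fin 5)).image p) = {s, b, c} := by
        rw [show ({1, 4}ᶜ : Finset (Fin 5)) = {0, 3, 2} by decide]; simp [p]
      rwa [this]
    · have : (({2, 3}ᶜ : Finset (Fin 5)).image p) = {s, d, a} := by
        rw [show ({2, 3}ᶜ : Finset (Fin 5)) = {0, 4, 1} by decide]; simp [p]
      rwa [this]
    · have : (({2, 4}ᶜ : Finset (Fin 5)).image p) = {s, a, b} := by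
        rw [show ({2, 4}ᶜ : Finset (Fin 5)) = {0, 1, 3} by decide]; simp [p]
      rwa [this])
  -- repackage the covering property
  have cover' : ∀ q ∈ L.space, ∃ F ∈ L.faces, q ∈ convexHull ℝ (F : Set E3) ∧
      F ⊆ {s, a, c, b, d} ∧ (b ∉ F ∨ d ∉ F) := by
    intro q hq
    obtain ⟨i, k, hi, hk, h⟩ := cover q hq
    have hsub : ({i, k}ᶜ : Finset (Fin 5)).image p ⊆ {s, a, c, b, d} := by
      intro y hy
      obtain ⟨j, -, rfl⟩ := Finset.mem_image.1 hy
      fin_cases j <;> simp [p]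
    refine ⟨_, ?_, h, hsub, ?_⟩
    · rcases hi with rfl | rfl | rfl <;> rcases hk with rfl | rfl
      · rw [show ({0, 3}ᶜ : Finset (Fin 5)) = {1, 4, 2} by decide]; simpa [p] using hadc
      · rw [show ({0, 4}ᶜ : Finset (Fin 5)) = {1, 3, 2} by decide]; simpa [p] using habc
      · rw [show ({1, 3}ᶜ : Finset (Fin 5)) = {0, 2, 4} by decide]; simpa [p] using h3
      · rw [show ({1, 4}ᶜ : Finset (Fin 5)) = {0, 3, 2} by decide]; simpa [p] using h2
      · rw [show ({2, 3}ᶜ : Finset (Fin 5)) = {0, 4, 1} by decide]; simpa [p] using h4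
      · rw [show ({2, 4}ᶜ : Finset (Fin 5)) = {0, 1, 3} by decide]; simpa [p] using h1
    · rcases hk with rfl | rfl
      · left
        intro hb
        obtain ⟨j, hj, hjb⟩ := Finset.mem_image.1 hb
        have : j = 3 := hp hjb
        simp [this] at hj
      · right
        intro hb
        obtain ⟨j, hj, hjb⟩ := Finset.mem_image.1 hb
        have : j = 4 := hp hjb
        simp [this] at hj
  refine ⟨b, d, s, a, c, hnd, ?_, hsa, hac, hsc, hbs, ?_, hbc, hds, hda, ?_, ?_⟩
  · intro v
    constructor
    · intro hv
      obtain ⟨F, hF, hvF, hsub, -⟩ := cover' v (L.vertices_subset_space hv)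
      have := hsub ((SimplicialComplex.vertex_mem_convexHull_iff hv hF).1 hvF)
      simp only [Finset.mem_insert, Finset.mem_singleton] at this
      tauto
    · rintro (rfl | rfl | rfl | rfl | rfl)
      · exact down _ h1 (by simp) (by simp)
      · exact down _ h3 (by simp) (by simp)
      · exact down _ h1 (by simp) (by simp)
      · exact down _ h1 (by simp) (by simp)
      · exact down _ h2 (by simp) (by simp)
  · rwa [Finset.pair_comm]
  · rwa [Finset.pair_comm]
  · intro hbd
    have hmid : midpoint ℝ b d ∈ convexHull ℝ (({b, d} : Finset E3) : Set E3) := by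
      rw [Finset.coe_pair, convexHull_pair]
      exact midpoint_mem_segment b d
    obtain ⟨F, hF, hqF, -, hbF⟩ :=
      cover' _ (SimplicialComplex.convexHull_subset_space hbd hmid)
    have h := L.inter_subset_convexHull hbd hF ⟨hmid, hqF⟩
    rcases hbF with hbF | hbF
    · have h' := convexHull_mono (𝕜 := ℝ) (t := {d}) (by
        rintro y ⟨hy, hyF⟩
        simp only [Finset.coe_pair, Set.mem_insert_iff, Set.mem_singleton_iff] at hy ⊢
        rcases hy with rfl | rfl
        · exact absurd hyF hbF
        · rfl) h
      simp only [convexHull_singleton, Set.mem_singleton_iff] at h'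
      exact nbd ((midpoint_eq_right_iff ℝ).1 h')
    · have h' := convexHull_mono (𝕜 := ℝ) (t := {b}) (by
        rintro y ⟨hy, hyF⟩
        simp only [Finset.coe_pair, Set.mem_insert_iff, Set.mem_singleton_iff] at hy ⊢
        rcases hy with rfl | rfl
        · rfl
        · exact absurd hyF hbF) h
      simp only [convexHull_singleton, Set.mem_singleton_iff] at h'
      exact nbd ((midpoint_eq_left_iff ℝ).1 h')

end CoxOrb

/-- If `L` is a metric flag labeled triangulation of the 2-sphere which is not
the suspension of a 3-gon and `s` is a 4-Euclidean vertex, then the link and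
the closed star of `s` are full subcomplexes of `L`. -/
theorem link_and_star_full_of_fourEuclidean
    (L : SimplicialComplex ℝ E3) (m : E3 → E3 → ℕ)
    (hL : IsLabeledS2 L m) (hflag : MetricFlag L m)
    (hnot : ¬ IsSuspensionOfThreeGon L)
    (s : E3) (hs : IsFourEuclidean L m s) :
    IsFullSubcomplex L (link L s) ∧ IsFullSubcomplex L (star L s) := by
  obtain ⟨hs0, v, hv, hlv, hfv, hmv⟩ := hs
  have nsv : ∀ i, v i ≠ s := by
    intro i
    have : v i ∈ linkVerts L s := by
      rw [hlv]
      fin_cases i <;> simp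
    exact this.1
  have hd02 : ({v 0, v 2} : Finset E3) ∉ L.faces := by
    intro h
    refine hnot (susp_of_diag L m hL hflag s (v 0) (v 1) (v 2) (v 3) ?_ (hfv 0) (hfv 1) (hfv 2)
      (hfv 3) (hmv 0) (hmv 1) (hmv 2) (hmv 3) h)
    simp [hv.eq_iff, nsv, (nsv _).symm]
  have hd13 : ({v 1, v 3} : Finset E3) ∉ L.faces := by
    intro h
    refine hnot (susp_of_diag L m hL hflag s (v 1) (v 2) (v 3) (v 0) ?_ (hfv 1) (hfv 2) (hfv 3)
      (hfv 0) (hmv 1) (hmv 2) (hmv 3) (hmv 0) h)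
    simp [hv.eq_iff, nsv, (nsv _).symm]
  -- a face with all vertices in the link of `s` is a face of the link
  have main : ∀ F ∈ L.faces, (∀ y ∈ F, y ∈ linkVerts L s) → insert s F ∈ L.faces := by
    intro F hF hFl
    have hFn := SimplicialComplex.nonempty_of_mem_faces hF
    have no02 : ¬ (v 0 ∈ F ∧ v 2 ∈ F) := fun h => hd02 (L.down_closed hF
      (Finset.insert_subset h.1 (Finset.singleton_subset_iff.2 h.2)) (by simp))
    have no13 : ¬ (v 1 ∈ F ∧ v 3 ∈ F) := fun h => hd13 (L.down_closed hF
      (Finset.insert_subset h.1 (Finset.singleton_subset_iff.2 h.2)) (by simp))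
    have hFl' : ∀ y ∈ F, y = v 0 ∨ y = v 1 ∨ y = v 2 ∨ y = v 3 := by
      intro y hy
      have := hFl y hy
      rw [hlv] at this
      simpa using this
    have f0 : ({s, v 0, v 1} : Finset E3) ∈ L.faces := hfv 0
    have f1 : ({s, v 1, v 2} : Finset E3) ∈ L.faces := hfv 1
    have f2 : ({s, v 2, v 3} : Finset E3) ∈ L.faces := hfv 2
    have f3 : ({s, v 3, v 0} : Finset E3) ∈ L.faces := hfv 3
    have hne : (insert s F).Nonempty := Finset.insert_nonempty _ _
    clear hfv hmv hlv hFl hflag hL hnot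
    have hsub : insert s F ⊆ {s, v 0, v 1} ∨ insert s F ⊆ {s, v 1, v 2} ∨
        insert s F ⊆ {s, v 2, v 3} ∨ insert s F ⊆ {s, v 3, v 0} := by
      by_cases a0 : v 0 ∈ F
      · have a2 : v 2 ∉ F := fun h => no02 ⟨a0, h⟩
        by_cases a1 : v 1 ∈ F
        · have a3 : v 3 ∉ F := fun h => no13 ⟨a1, h⟩
          left
          refine Finset.insert_subset (by simp) fun y hy => ?_
          rcases hFl' y hy with rfl | rfl | rfl | rfl <;>
            first | exact absurd hy (by assumption) | simp
        · right; right; right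
          refine Finset.insert_subset (by simp) fun y hy => ?_
          rcases hFl' y hy with rfl | rfl | rfl | rfl <;>
            first | exact absurd hy (by assumption) | simp
      · by_cases a1 : v 1 ∈ F
        · have a3 : v 3 ∉ F := fun h => no13 ⟨a1, h⟩
          right; left
          refine Finset.insert_subset (by simp) fun y hy => ?_
          rcases hFl' y hy with rfl | rfl | rfl | rfl <;>
            first | exact absurd hy (by assumption) | simp
        · right; right; left
          refine Finset.insert_subset (by simp) fun y hy => ?_
          rcases hFl' y hy with rfl | rfl | rfl | rfl <;>
            first | exact absurd hy (by assumption) | simp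
    rcases hsub with h | h | h | h
    · exact L.down_closed f0 h hne
    · exact L.down_closed f1 h hne
    · exact L.down_closed f2 h hne
    · exact L.down_closed f3 h hne
  refine ⟨⟨fun F hF => hF.1, fun F hF hFl => ?_⟩, ⟨fun F hF => hF.1, fun F hF hFl => ?_⟩⟩
  · refine ⟨hF, fun h => (hFl s h).2.1 (by simp), main F hF fun y hy => ?_⟩
    obtain ⟨-, hy1, hy2⟩ := hFl y hy
    exact ⟨fun h => hy1 (by simp [h]), hy2⟩
  · refine ⟨hF, ?_⟩
    by_cases hsF : s ∈ F
    · exact ⟨F, hF, hsF, subset_rfl⟩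
    · refine ⟨insert s F, main F hF fun y hy => ?_, Finset.mem_insert_self _ _,
        Finset.subset_insert _ _⟩
      obtain ⟨-, G, hG, hsG, hyG⟩ := hFl y hy
      refine ⟨fun h => hsF (h ▸ hy), L.down_closed hG ?_ (by simp)⟩
      intro z hz
      simp only [Finset.mem_insert, Finset.mem_singleton] at hz
      rcases hz with rfl | rfl
      · exact hsG
      · exact hyG (Finset.mem_singleton_self _)
end

section
/- Suppose L is a metric flag labeled triangulation of the 2-sphere. Then every infinite, maximal RA-suspension T in L is a full subcomplex of L; in particular, the two suspension points of T are not joined by an edge of L. -/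
open Geometry

open CoxOrb

/-- A nowhere zero map from the plane to `ℂ` cannot be odd on the unit circle. -/
theorem no_odd_map (H : ℝ × ℝ → ℂ) (hc : Continuous H) (h0 : ∀ u, H u ≠ 0)
    (hodd : ∀ u, ‖u‖ = 1 → H (-u) = - H u) : False := by
  obtain ⟨k, ⟨-, hk⟩, -⟩ := Complex.isCoveringMapOn_exp.existsUnique_continuousMap_lifts
    (A := ℝ × ℝ) (⟨H, hc⟩ : C(ℝ × ℝ, ℂ)) (a₀ := 0) (e₀ := Complex.log (H 0))
    (by simpa using Complex.exp_log (h0 0)) (by intro a; simpa using h0 a)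
  have hk' : ∀ u, Complex.exp (k u) = H u := fun u => congrFun hk u
  have hexp : ∀ u, ‖u‖ = 1 → Complex.exp (k (-u) - k u) = -1 := by
    intro u hu
    rw [Complex.exp_sub, hk', hk', hodd u hu, neg_div, div_self (h0 u)]
  have hre : ∀ u, ‖u‖ = 1 → (k (-u) - k u).re = 0 := by
    intro u hu
    have h := congrArg norm (hexp u hu)
    rw [Complex.norm_exp, norm_neg, norm_one] at h
    simpa using h
  have hconn : IsPreconnected (Metric.sphere (0 : ℝ × ℝ) 1) := by
    apply isPreconnected_sphere
    simp [rank_prod]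
    norm_num
  let d : ℝ × ℝ → ℝ := fun u => (k (-u) - k u).im
  have hd : Continuous d := by
    have := k.continuous
    fun_prop
  have hneg : ∀ u, d (-u) = - d u := by
    intro u; simp [d]
  have h1 : ((1, 0) : ℝ × ℝ) ∈ Metric.sphere (0 : ℝ × ℝ) 1 := by
    simp [Prod.norm_def]
  have h2 : (-(1, 0) : ℝ × ℝ) ∈ Metric.sphere (0 : ℝ × ℝ) 1 := by
    simp [Prod.norm_def]
  have key : ∃ u ∈ Metric.sphere (0 : ℝ × ℝ) 1, d u = 0 := by
    rcases le_total (d (1, 0)) 0 with h | h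
    · have := hconn.intermediate_value h1 h2 hd.continuousOn
      exact this ⟨h, by rw [hneg]; linarith⟩
    · have := hconn.intermediate_value h2 h1 hd.continuousOn
      exact this ⟨by rw [hneg]; linarith, h⟩
  obtain ⟨u, hu, hdu⟩ := key
  have hu' : ‖u‖ = 1 := by simpa using hu
  have : k (-u) - k u = 0 := Complex.ext (hre u hu') hdu
  have h := hexp u hu'
  rw [this, Complex.exp_zero] at h
  norm_num at h

/-- A form of the Borsuk-Ulam theorem in dimension two. -/
theorem borsuk_ulam_two (f : (ℝ × ℝ) × ℝ → ℂ) (hc : Continuous f)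
    (hne : ∀ p, p ≠ 0 → f p ≠ f (-p)) : False := by
  apply no_odd_map (fun u => f (u, max 0 (1 - ‖u‖)) - f (-(u, max 0 (1 - ‖u‖))))
  · fun_prop
  · intro u h
    refine hne _ ?_ (sub_eq_zero.1 h)
    intro h'
    rw [Prod.mk_eq_zero] at h'
    obtain ⟨rfl, h2⟩ := h'
    simp at h2
  · intro u hu
    simp [hu]

/-- Coordinates on one page of the book. -/
noncomputable def pagePt (t t' v : E3) (s z : ℝ) : E3 :=
  s • v + ((1 - s) / 2 - z) • t + ((1 - s) / 2 + z) • t'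

theorem pagePt_inj_page (L : SimplicialComplex ℝ E3) {t t' v : E3} (h1 : t ≠ t') (h2 : v ≠ t)
    (h3 : v ≠ t') (hf : ({t, t', v} : Finset E3) ∈ L.faces) {s z s' z' : ℝ}
    (h : pagePt t t' v s z = pagePt t t' v s' z') : s = s' ∧ z = z' := by
  have hi := L.indep hf
  rw [affineIndependent_iff] at hi
  let w : E3 → ℝ := fun e => if e = t then ((1 - s) / 2 - z) - ((1 - s') / 2 - z') else
    if e = t' then ((1 - s) / 2 + z) - ((1 - s') / 2 + z') else s - s'
  have hwt : w t = ((1 - s) / 2 - z) - ((1 - s') / 2 - z') := by simp [w]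
  have hwt' : w t' = ((1 - s) / 2 + z) - ((1 - s') / 2 + z') := by simp [w, h1.symm]
  have hwv : w v = s - s' := by simp [w, h2, h3]
  have ht : t ∉ ({t', v} : Finset E3) := by simp [h1, h2.symm]
  have ht' : t' ∉ ({v} : Finset E3) := by simp [h3.symm]
  have hs := hi Finset.univ (fun e => w e) (by
    rw [Finset.sum_coe_sort ({t, t', v} : Finset E3) w, Finset.sum_insert ht,
      Finset.sum_insert ht', Finset.sum_singleton, hwt, hwt', hwv]
    ring) (by
    rw [Finset.sum_coe_sort ({t, t', v} : Finset E3) (fun e => w e • e), Finset.sum_insert ht,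
      Finset.sum_insert ht', Finset.sum_singleton, hwt, hwt', hwv]
    have := sub_eq_zero.2 h
    rw [← this, pagePt, pagePt]
    module)
  have e1 := hs ⟨v, by simp⟩ (Finset.mem_univ _)
  have e2 := hs ⟨t, by simp⟩ (Finset.mem_univ _)
  simp only [hwv] at e1
  simp only [hwt] at e2
  constructor <;> linarith

theorem pagePt_mem {t t' v : E3} {s z : ℝ} (h0 : 0 ≤ s) (h1 : |z| ≤ (1 - s) / 2) :
    pagePt t t' v s z ∈ convexHull ℝ (({t, t', v} : Finset E3) : Set E3) := by
  have hz := abs_le.1 h1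
  have hc := convex_convexHull ℝ (({t, t', v} : Finset E3) : Set E3)
  have hsub := subset_convexHull ℝ (({t, t', v} : Finset E3) : Set E3)
  have := hc.sum_mem (t := Finset.univ) (w := ![s, (1 - s) / 2 - z, (1 - s) / 2 + z])
    (z := ![v, t, t'])
    (by intro i _; fin_cases i <;> simp <;> linarith)
    (by simp [Fin.sum_univ_three]; ring)
    (by intro i _; apply hsub; fin_cases i <;> simp)
  simpa [Fin.sum_univ_three, pagePt] using this

theorem pagePt_zero_of_mem (L : SimplicialComplex ℝ E3) {t t' v : E3} (h1 : t ≠ t') (h2 : v ≠ t)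
    (h3 : v ≠ t') (hf : ({t, t', v} : Finset E3) ∈ L.faces) {s z : ℝ}
    (h : pagePt t t' v s z ∈ convexHull ℝ ({t, t'} : Set E3)) : s = 0 := by
  rw [convexHull_pair, segment_eq_image] at h
  obtain ⟨c, -, hc⟩ := h
  refine (pagePt_inj_page L h1 h2 h3 hf (z := z) (s' := 0) (z' := c - 1 / 2) ?_).1
  rw [← hc]
  simp only [pagePt]
  module

theorem pagePt_inj (L : SimplicialComplex ℝ E3) {t t' v v' : E3} (h1 : t ≠ t') (h2 : v ≠ t)
    (h3 : v ≠ t') (h2' : v' ≠ t) (h3' : v' ≠ t')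
    (hf : ({t, t', v} : Finset E3) ∈ L.faces) (hf' : ({t, t', v'} : Finset E3) ∈ L.faces)
    {s z s' z' : ℝ} (hs : 0 ≤ s) (hz : |z| ≤ (1 - s) / 2)
    (hs' : 0 ≤ s') (hz' : |z'| ≤ (1 - s') / 2)
    (h : pagePt t t' v s z = pagePt t t' v' s' z') :
    s = s' ∧ z = z' ∧ (v ≠ v' → s = 0) := by
  by_cases hv : v = v'
  · subst hv
    obtain ⟨a, b⟩ := pagePt_inj_page L h1 h2 h3 hf h
    exact ⟨a, b, fun h => absurd rfl h⟩
  · have hm := pagePt_mem (t := t) (t' := t') (v := v) hs hz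
    have hm' := pagePt_mem (t := t) (t' := t') (v := v') hs' hz'
    rw [← h] at hm'
    have hint := L.inter_subset_convexHull hf hf' ⟨hm, hm'⟩
    have hpair : (({t, t', v} : Finset E3) : Set E3) ∩ (({t, t', v'} : Finset E3) : Set E3)
        = {t, t'} := by
      ext x
      simp only [Finset.coe_insert, Finset.coe_singleton, Set.mem_inter_iff, Set.mem_insert_iff,
        Set.mem_singleton_iff]
      constructor
      · rintro ⟨h | h | h, h' | h' | h'⟩ <;> grind
      · grind
    rw [hpair] at hint
    have e := pagePt_zero_of_mem L h1 h2 h3 hf hint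
    rw [h] at hint
    have e' := pagePt_zero_of_mem L h1 h2' h3' hf' hint
    subst e e'
    refine ⟨rfl, ?_, fun _ => rfl⟩
    refine (pagePt_inj_page L h1 h2 h3 hf (s := 0) (s' := 0) ?_).2
    rw [h, pagePt, pagePt]
    module

/-- The book with three pages. -/
noncomputable def bookPt (t t' v₀ v₁ v₂ : E3) (s₀ s₁ s₂ z : ℝ) : E3 :=
  s₀ • v₀ + s₁ • v₁ + s₂ • v₂ + ((1 - (s₀ + s₁ + s₂)) / 2 - z) • t +
    ((1 - (s₀ + s₁ + s₂)) / 2 + z) • t'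

noncomputable def nrm (u : ℝ × ℝ) : ℝ := 4 * (1 + |u.1| + |u.2|)
noncomputable def c0 (u : ℝ × ℝ) : ℝ := max 0 (u.1 - max u.2 0) / nrm u
noncomputable def c1 (u : ℝ × ℝ) : ℝ := max 0 (u.2 - max u.1 0) / nrm u
noncomputable def c2 (u : ℝ × ℝ) : ℝ := max 0 (0 - max u.1 u.2) / nrm u
noncomputable def cz (z : ℝ) : ℝ := z / (4 * (1 + |z|))

theorem nrm_pos (u : ℝ × ℝ) : 0 < nrm u := by unfold nrm; positivity

theorem cont_nrm : Continuous nrm := by unfold nrm; fun_prop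
theorem cont_c0 : Continuous c0 :=
  Continuous.div (by fun_prop) cont_nrm (fun u => (nrm_pos u).ne')
theorem cont_c1 : Continuous c1 :=
  Continuous.div (by fun_prop) cont_nrm (fun u => (nrm_pos u).ne')
theorem cont_c2 : Continuous c2 :=
  Continuous.div (by fun_prop) cont_nrm (fun u => (nrm_pos u).ne')
theorem cont_cz : Continuous cz :=
  Continuous.div (by fun_prop) (by fun_prop) (fun u => by positivity)

theorem c_bound (u : ℝ × ℝ) : (0 ≤ c0 u ∧ c0 u ≤ 1 / 4) ∧ (0 ≤ c1 u ∧ c1 u ≤ 1 / 4) ∧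
    (0 ≤ c2 u ∧ c2 u ≤ 1 / 4) := by
  have hn := nrm_pos u
  have ha := abs_le.1 (le_refl |u.1|)
  have hb := abs_le.1 (le_refl |u.2|)
  have hp1 := abs_nonneg u.1
  have hp2 := abs_nonneg u.2
  have key : ∀ x : ℝ, x ≤ |u.1| + |u.2| → 0 ≤ max 0 x / nrm u ∧ max 0 x / nrm u ≤ 1 / 4 := by
    intro x hx
    refine ⟨by positivity, ?_⟩
    rw [div_le_iff₀ hn]
    apply max_le
    · positivity
    · unfold nrm; linarith
  refine ⟨key _ ?_, key _ ?_, key _ ?_⟩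
  · linarith [le_max_right u.2 0]
  · linarith [le_max_right u.1 0]
  · linarith [le_max_left u.1 u.2]

theorem cz_bound (z : ℝ) : |cz z| ≤ 1 / 4 := by
  unfold cz
  rw [abs_div, div_le_iff₀ (by positivity), abs_of_pos (by positivity : 0 < 4 * (1 + |z|))]
  linarith

theorem c_support (u : ℝ × ℝ) : (c1 u = 0 ∧ c2 u = 0) ∨ (c0 u = 0 ∧ c2 u = 0) ∨
    (c0 u = 0 ∧ c1 u = 0) := by
  have hn := (nrm_pos u).ne'
  simp only [c0, c1, c2, div_eq_zero_iff, hn, or_false]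
  grind

theorem c_ne (u : ℝ × ℝ) (h0 : c0 u = c0 (-u)) (h1 : c1 u = c1 (-u)) (h2 : c2 u = c2 (-u)) :
    u = 0 := by
  have hn := (nrm_pos u).ne'
  have e : nrm (-u) = nrm u := by simp [nrm]
  simp only [c0, c1, c2, e, div_left_inj' hn] at h0 h1 h2
  obtain ⟨a, b⟩ := u
  simp only [Prod.fst_neg, Prod.snd_neg] at h0 h1 h2
  have : a = 0 ∧ b = 0 := by constructor <;> grind
  simp [this.1, this.2]

theorem edge_le_two (L : SimplicialComplex ℝ E3)
    (hS : Nonempty (L.space ≃ₜ (Metric.sphere (0 : E3) 1 : Set E3)))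
    (t t' v₀ v₁ v₂ : E3) (htt : t ≠ t')
    (h0 : v₀ ≠ t) (h0' : v₀ ≠ t') (h1 : v₁ ≠ t) (h1' : v₁ ≠ t') (h2 : v₂ ≠ t) (h2' : v₂ ≠ t')
    (h01 : v₀ ≠ v₁) (h02 : v₀ ≠ v₂) (h12 : v₁ ≠ v₂)
    (f0 : ({t, t', v₀} : Finset E3) ∈ L.faces) (f1 : ({t, t', v₁} : Finset E3) ∈ L.faces)
    (f2 : ({t, t', v₂} : Finset E3) ∈ L.faces) : False := by
  obtain ⟨φ⟩ := hS
  let F : (ℝ × ℝ) × ℝ → E3 := fun p =>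
    bookPt t t' v₀ v₁ v₂ (c0 p.1) (c1 p.1) (c2 p.1) (cz p.2)
  have hFc : Continuous F := by
    have := cont_c0
    have := cont_c1
    have := cont_c2
    have := cont_cz
    unfold F bookPt
    fun_prop
  -- each point lies on some page
  have hpage : ∀ p, (F p = pagePt t t' v₀ (c0 p.1) (cz p.2) ∧ c1 p.1 = 0 ∧ c2 p.1 = 0) ∨
      (F p = pagePt t t' v₁ (c1 p.1) (cz p.2) ∧ c0 p.1 = 0 ∧ c2 p.1 = 0) ∨
      (F p = pagePt t t' v₂ (c2 p.1) (cz p.2) ∧ c0 p.1 = 0 ∧ c1 p.1 = 0) := by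
    intro p
    rcases c_support p.1 with ⟨a, b⟩ | ⟨a, b⟩ | ⟨a, b⟩
    · left; refine ⟨?_, a, b⟩; simp [F, bookPt, pagePt, a, b]
    · right; left; refine ⟨?_, a, b⟩; simp [F, bookPt, pagePt, a, b]
    · right; right; refine ⟨?_, a, b⟩; simp [F, bookPt, pagePt, a, b]
  have hFm : ∀ p, F p ∈ L.space ∧ F p ≠ v₀ := by
    intro p
    have hz := cz_bound p.2
    obtain ⟨b0, b1, b2⟩ := c_bound p.1
    have hv : v₀ = pagePt t t' v₀ 1 0 := by simp [pagePt]
    rcases hpage p with ⟨e, -, -⟩ | ⟨e, -, -⟩ | ⟨e, -, -⟩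
    · refine ⟨?_, ?_⟩
      · rw [e]
        exact L.convexHull_subset_space f0 (pagePt_mem b0.1 (by linarith))
      · intro h
        rw [e] at h
        have := pagePt_inj L htt h0 h0' h0 h0' f0 f0 b0.1 (by linarith) (by norm_num)
          (by norm_num) (h.trans hv)
        linarith [this.1]
    · refine ⟨?_, ?_⟩
      · rw [e]
        exact L.convexHull_subset_space f1 (pagePt_mem b1.1 (by linarith))
      · intro h
        rw [e] at h
        have := pagePt_inj L htt h1 h1' h0 h0' f1 f0 b1.1 (by linarith) (by norm_num)
          (by norm_num) (h.trans hv)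
        linarith [this.1]
    · refine ⟨?_, ?_⟩
      · rw [e]
        exact L.convexHull_subset_space f2 (pagePt_mem b2.1 (by linarith))
      · intro h
        rw [e] at h
        have := pagePt_inj L htt h2 h2' h0 h0' f2 f0 b2.1 (by linarith) (by norm_num)
          (by norm_num) (h.trans hv)
        linarith [this.1]
  have hinj : ∀ p q, F p = F q → c0 p.1 = c0 q.1 ∧ c1 p.1 = c1 q.1 ∧ c2 p.1 = c2 q.1 ∧
      cz p.2 = cz q.2 := by
    intro p q h
    have hz := cz_bound p.2
    obtain ⟨b0, b1, b2⟩ := c_bound p.1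
    have hz' := cz_bound q.2
    obtain ⟨b0', b1', b2'⟩ := c_bound q.1
    rcases hpage p with ⟨e, x, y⟩ | ⟨e, x, y⟩ | ⟨e, x, y⟩ <;>
    rcases hpage q with ⟨e', x', y'⟩ | ⟨e', x', y'⟩ | ⟨e', x', y'⟩ <;>
    rw [e, e'] at h
    · have := pagePt_inj L htt h0 h0' h0 h0' f0 f0 b0.1 (by linarith) b0'.1 (by linarith) h
      grind
    · have := pagePt_inj L htt h0 h0' h1 h1' f0 f1 b0.1 (by linarith) b1'.1 (by linarith) h
      grind
    · have := pagePt_inj L htt h0 h0' h2 h2' f0 f2 b0.1 (by linarith) b2'.1 (by linarith) h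
      grind
    · have := pagePt_inj L htt h1 h1' h0 h0' f1 f0 b1.1 (by linarith) b0'.1 (by linarith) h
      grind
    · have := pagePt_inj L htt h1 h1' h1 h1' f1 f1 b1.1 (by linarith) b1'.1 (by linarith) h
      grind
    · have := pagePt_inj L htt h1 h1' h2 h2' f1 f2 b1.1 (by linarith) b2'.1 (by linarith) h
      grind
    · have := pagePt_inj L htt h2 h2' h0 h0' f2 f0 b2.1 (by linarith) b0'.1 (by linarith) h
      grind
    · have := pagePt_inj L htt h2 h2' h1 h1' f2 f1 b2.1 (by linarith) b1'.1 (by linarith) h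
      grind
    · have := pagePt_inj L htt h2 h2' h2 h2' f2 f2 b2.1 (by linarith) b2'.1 (by linarith) h
      grind
  have hanti : ∀ p, F p = F (-p) → p = 0 := by
    intro p h
    obtain ⟨a, b, c, d⟩ := hinj _ _ h
    have hu : p.1 = 0 := c_ne _ a b c
    have hz : p.2 = 0 := by
      have e : cz ((-p).2) = - cz p.2 := by simp [cz, neg_div]
      rw [e] at d
      have d0 : cz p.2 = 0 := by linarith
      unfold cz at d0
      rw [div_eq_zero_iff] at d0
      rcases d0 with h | h
      · exact h
      · exact absurd h (by positivity)
    exact Prod.ext hu hz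
  -- transport to the sphere, then to the plane
  have hv0 : v₀ ∈ L.space := L.subset_space f0 (by simp)
  let pole := φ ⟨v₀, hv0⟩
  have : Fact (Module.finrank ℝ E3 = 2 + 1) := ⟨by simp⟩
  let G : (ℝ × ℝ) × ℝ → (Metric.sphere (0 : E3) 1 : Set E3) := fun p => φ ⟨F p, (hFm p).1⟩
  have hG : Continuous G := φ.continuous.comp (hFc.subtype_mk _)
  have hGm : ∀ p, G p ∈ (stereographic' 2 pole).source := by
    intro p
    rw [stereographic'_source]
    intro h
    have := φ.injective h
    exact (hFm p).2 (congrArg Subtype.val this)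
  have hS : Continuous (fun p => stereographic' 2 pole (G p)) :=
    (stereographic' 2 pole).continuousOn.comp_continuous hG hGm
  refine borsuk_ulam_two (fun p => Complex.orthonormalBasisOneI.repr.symm
    (stereographic' 2 pole (G p))) ((LinearIsometryEquiv.continuous _).comp hS) ?_
  intro p hp h
  have h := Complex.orthonormalBasisOneI.repr.symm.injective h
  have h := (stereographic' 2 pole).injOn (hGm _) (hGm _) h
  have h := φ.injective h
  exact hp (hanti p (congrArg Subtype.val h))

theorem pair_notMem_susp {L : SimplicialComplex ℝ E3} {m : E3 → E3 → ℕ} {T Z : Set (Finset E3)}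
    {t t' : E3} (hd : IsRASuspData L m T Z t t') : ({t, t'} : Finset E3) ∉ T := by
  rw [hd.eq]
  have htt := hd.tne
  rintro (((h | h) | ⟨F, hF, h⟩) | ⟨F, hF, h⟩)
  · exact hd.t_notin _ h (by simp)
  · rcases h with h | h
    · have : t' ∈ ({t} : Finset E3) := h ▸ (by simp)
      simp at this; exact htt this.symm
    · have : t ∈ ({t'} : Finset E3) := h ▸ (by simp)
      simp at this; exact htt this
  · have : t' ∈ insert t F := by
      simp only at h
      rw [h]; simp
    rcases Finset.mem_insert.1 this with h | h
    · exact htt h.symm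
    · exact hd.t'_notin _ hF h
  · have : t ∈ insert t' F := by
      simp only at h
      rw [h]; simp
    rcases Finset.mem_insert.1 this with h | h
    · exact htt h
    · exact hd.t_notin _ hF h

theorem finset_subset_pair {F : Finset E3} {a b : E3} (h : F ⊆ {a, b}) :
    F = ∅ ∨ F = {a} ∨ F = {b} ∨ F = {a, b} := by
  have h' : (F : Set E3) ⊆ {a, b} := by simpa using Finset.coe_subset.2 h
  rcases Set.subset_pair_iff_eq.1 h' with h | h | h | h
  · left; exact_mod_cast h
  · right; left; exact_mod_cast h
  · right; right; left; exact_mod_cast h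
  · right; right; right; exact_mod_cast h

theorem no_edge (L : SimplicialComplex ℝ E3) (m : E3 → E3 → ℕ)
    (hL : IsLabeledS2 L m) (hflag : MetricFlag L m)
    (T Z : Set (Finset E3)) (t t' : E3) (hd : IsRASuspData L m T Z t t')
    (hinf : InfiniteBase Z) (hfull : IsFullSubcomplex L Z)
    (hmax : ∀ T', IsRASusp L m T' → T ⊆ T' → T = T') :
    ({t, t'} : Finset E3) ∉ L.faces := by
  intro hedge
  have htt := hd.tne
  have hne : ∀ v, ({v} : Finset E3) ∈ Z → v ≠ t ∧ v ≠ t' := by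
    intro v hv
    constructor
    · rintro rfl; exact hd.t_notin _ hv (by simp)
    · rintro rfl; exact hd.t'_notin _ hv (by simp)
  have hcone : ∀ F ∈ Z, insert t F ∈ T ∧ insert t' F ∈ T := by
    intro F hF
    rw [hd.eq]
    exact ⟨Or.inl (Or.inr ⟨F, hF, rfl⟩), Or.inr ⟨F, hF, rfl⟩⟩
  have htri : ∀ v, ({v} : Finset E3) ∈ Z → ({t, t', v} : Finset E3) ∈ L.faces := by
    intro v hv
    obtain ⟨n1, n2⟩ := hne v hv
    obtain ⟨i1, i2⟩ := hcone _ hv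
    rw [hflag t t' v htt n2.symm n1.symm hedge (hd.subset i2) (hd.subset i1)]
    rw [hL.symm v t, (hd.labels v hv).1, (hd.labels v hv).2]
    have := hL.two_le t t' htt hedge
    have : (0 : ℝ) < 1 / (m t t' : ℝ) := by
      apply one_div_pos.2
      exact_mod_cast (by omega : 0 < m t t')
    push_cast
    linarith
  have hvert : ∀ F ∈ Z, ∀ v ∈ F, ({v} : Finset E3) ∈ Z := by
    intro F hF v hv
    exact hd.zdown F hF _ (by simpa using hv) (by simp)
  have hFne : ∀ F ∈ Z, F.Nonempty := fun F hF => L.nonempty_of_mem_faces (hd.zsubset hF)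
  obtain ⟨F₀, hF₀⟩ := hd.znonempty
  obtain ⟨u, hu⟩ := hFne _ hF₀
  have huZ := hvert _ hF₀ u hu
  by_cases hone : ∀ v, ({v} : Finset E3) ∈ Z → v = u
  · apply hinf.1
    refine ⟨u, ?_⟩
    ext F
    constructor
    · intro hF
      rw [Set.mem_singleton_iff]
      refine Finset.eq_singleton_iff_nonempty_unique_mem.2 ⟨hFne F hF, ?_⟩
      intro x hx
      exact hone x (hvert F hF x hx)
    · rintro rfl
      exact huZ
  push Not at hone
  obtain ⟨v, hvZ, hvu⟩ := hone
  obtain ⟨nu, nu'⟩ := hne u huZ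
  obtain ⟨nv, nv'⟩ := hne v hvZ
  have htwo : ∀ w, ({w} : Finset E3) ∈ Z → w = u ∨ w = v := by
    intro w hw
    by_contra! hcon
    obtain ⟨nw, nw'⟩ := hne w hw
    exact edge_le_two L hL.sphere t t' u v w htt nu nu' nv nv' nw nw' hvu.symm hcon.1.symm
      hcon.2.symm (htri u huZ) (htri v hvZ) (htri w hw)
  have hZsub : ∀ F ∈ Z, F = {u} ∨ F = {v} ∨ F = {u, v} := by
    intro F hF
    have hs : F ⊆ {u, v} := by
      intro x hx
      simpa using htwo x (hvert F hF x hx)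
    have hn := hFne F hF
    rcases finset_subset_pair hs with h | h | h | h
    · rw [h] at hn; simp at hn
    · exact Or.inl h
    · exact Or.inr (Or.inl h)
    · exact Or.inr (Or.inr h)
  have huv : ({u, v} : Finset E3) ∉ Z := by
    intro huv
    apply hinf.2
    refine ⟨u, v, hvu.symm, ?_⟩
    ext F
    constructor
    · intro hF
      simpa using hZsub F hF
    · rintro (rfl | rfl | rfl) <;> assumption
  have hZ : ∀ F ∈ Z, F = {u} ∨ F = {v} := by
    intro F hF
    rcases hZsub F hF with h | h | h
    · exact Or.inl h
    · exact Or.inr h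
    · exact absurd (h ▸ hF) huv
  -- the larger suspension
  let Z' : Set (Finset E3) := {{t}, {t'}, {t, t'}}
  have hZ' : ∀ F ∈ Z', F = {t} ∨ F = {t'} ∨ F = {t, t'} := by
    intro F hF; simpa [Z'] using hF
  have hZ'sub : ∀ F ∈ Z', F ⊆ {t, t'} ∧ F.Nonempty := by
    intro F hF
    rcases hZ' F hF with rfl | rfl | rfl <;> simp
  have hfaces : ∀ F : Finset E3, F.Nonempty → ∀ w, ({w} : Finset E3) ∈ Z → F ⊆ {t, t', w} →
      F ∈ L.faces := fun F hF w hw hs => L.down_closed (htri w hw) hs hF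
  have hsubF : ∀ F ∈ joinSusp Z' u v, F ∈ L.faces := by
    rintro F (((h | h) | ⟨G, hG, rfl⟩) | ⟨G, hG, rfl⟩)
    · obtain ⟨a, b⟩ := hZ'sub F h
      exact hfaces F b u huZ (a.trans (by intro x; simp; tauto))
    · rcases h with rfl | rfl
      · exact hd.zsubset huZ
      · exact hd.zsubset hvZ
    · obtain ⟨a, b⟩ := hZ'sub G hG
      refine hfaces _ (by simp) u huZ ?_
      intro x hx
      rcases Finset.mem_insert.1 hx with rfl | hx
      · simp
      · have := a hx; simp at this ⊢; tauto
    · obtain ⟨a, b⟩ := hZ'sub G hG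
      refine hfaces _ (by simp) v hvZ ?_
      intro x hx
      rcases Finset.mem_insert.1 hx with rfl | hx
      · simp
      · have := a hx; simp at this ⊢; tauto
  have hdata : IsRASuspData L m (joinSusp Z' u v) Z' u v := by
    refine ⟨hsubF, fun F hF => hsubF F (Or.inl (Or.inl (Or.inl hF))), ?_, ⟨{t}, by simp [Z']⟩,
      hvu.symm, ?_, ?_, ?_, rfl⟩
    · intro F hF G hGF hG
      have hs := hGF.trans (hZ'sub F hF).1
      rcases finset_subset_pair hs with h | h | h | h
      · rw [h] at hG; simp at hG
      · simp [Z', h]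
      · simp [Z', h]
      · simp [Z', h]
    · intro F hF h
      have := (hZ'sub F hF).1 h
      simp at this; tauto
    · intro F hF h
      have := (hZ'sub F hF).1 h
      simp at this; tauto
    · intro x hx
      have := (hZ'sub _ hx).1 (Finset.mem_singleton_self x)
      simp only [Finset.mem_insert, Finset.mem_singleton] at this
      rcases this with rfl | rfl
      · exact ⟨(hL.symm _ _).trans (hd.labels u huZ).1, (hL.symm _ _).trans (hd.labels v hvZ).1⟩
      · exact ⟨(hL.symm _ _).trans (hd.labels u huZ).2, (hL.symm _ _).trans (hd.labels v hvZ).2⟩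
  have hTT : T ⊆ joinSusp Z' u v := by
    rw [hd.eq]
    have ht : ({t} : Finset E3) ∈ Z' := by simp [Z']
    have ht' : ({t'} : Finset E3) ∈ Z' := by simp [Z']
    rintro F (((h | h) | ⟨G, hG, rfl⟩) | ⟨G, hG, rfl⟩)
    · exact Or.inl (Or.inl (Or.inr (hZ F h)))
    · rcases h with rfl | rfl
      · exact Or.inl (Or.inl (Or.inl ht))
      · exact Or.inl (Or.inl (Or.inl ht'))
    · rcases hZ G hG with rfl | rfl
      · exact Or.inl (Or.inr ⟨_, ht, Finset.pair_comm _ _⟩)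
      · exact Or.inr ⟨_, ht, Finset.pair_comm _ _⟩
    · rcases hZ G hG with rfl | rfl
      · exact Or.inl (Or.inr ⟨_, ht', Finset.pair_comm _ _⟩)
      · exact Or.inr ⟨_, ht', Finset.pair_comm _ _⟩
  have hEq := hmax _ ⟨Z', u, v, hdata⟩ hTT
  apply pair_notMem_susp hd
  rw [hEq]
  exact Or.inl (Or.inl (Or.inl (by simp [Z'])))

/-- Every infinite, maximal RA-suspension `T` in a metric flag labeled
triangulation of the 2-sphere is a full subcomplex of `L`; in particular the
suspension points of `T` are not joined by an edge of `L`. -/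
theorem infMaxRASusp_full
    (L : SimplicialComplex ℝ E3) (m : E3 → E3 → ℕ)
    (hL : IsLabeledS2 L m) (hflag : MetricFlag L m)
    (T : Set (Finset E3)) (hT : IsInfMaxRASusp L m T) :
    IsFullSubcomplex L T ∧
    ∀ (Z : Set (Finset E3)) (t t' : E3), IsRASuspData L m T Z t t' →
      ({t, t'} : Finset E3) ∉ L.faces := by
  have hfullT : IsFullSubcomplex L T := by
    obtain ⟨⟨Z, t, t', hd, hinf, hfull⟩, hmax⟩ := hT
    have hno := no_edge L m hL hflag T Z t t' hd hinf hfull hmax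
    refine ⟨hd.subset, ?_⟩
    intro F hF hv
    have hvert : ∀ v ∈ F, v = t ∨ v = t' ∨ ({v} : Finset E3) ∈ Z := by
      intro v hvF
      have h := hv v hvF
      rw [hd.eq] at h
      rcases h with ((h | h) | ⟨G, hG, h⟩) | ⟨G, hG, h⟩
      · exact Or.inr (Or.inr h)
      · rcases h with h | h
        · exact Or.inl (Finset.singleton_injective h)
        · exact Or.inr (Or.inl (Finset.singleton_injective h))
      · left
        have : t ∈ ({v} : Finset E3) := by rw [← h]; simp
        exact (Finset.mem_singleton.1 this).symm
      · right; left
        have : t' ∈ ({v} : Finset E3) := by rw [← h]; simp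
        exact (Finset.mem_singleton.1 this).symm
    have hboth : ¬ (t ∈ F ∧ t' ∈ F) := by
      rintro ⟨a, b⟩
      refine hno (L.down_closed hF ?_ (by simp))
      intro x hx
      simp only [Finset.mem_insert, Finset.mem_singleton] at hx
      rcases hx with rfl | rfl <;> assumption
    have haux : ∀ s : E3, s ∈ F → (∀ v ∈ F, v = s ∨ ({v} : Finset E3) ∈ Z) →
        F = {s} ∨ ∃ G ∈ Z, insert s G = F := by
      intro s hs h
      by_cases he : (F.erase s).Nonempty
      · right
        refine ⟨F.erase s, hfull.2 _ (L.down_closed hF (Finset.erase_subset _ _) he) ?_,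
          Finset.insert_erase hs⟩
        intro v hv
        rw [Finset.mem_erase] at hv
        exact (h v hv.2).resolve_left hv.1
      · left
        rw [Finset.not_nonempty_iff_eq_empty] at he
        rw [← Finset.insert_erase hs, he]
        rfl
    rw [hd.eq]
    by_cases ht : t ∈ F
    · rcases haux t ht (by
        intro v hvF
        rcases hvert v hvF with h | h | h
        · exact Or.inl h
        · exact absurd ⟨ht, h ▸ hvF⟩ hboth
        · exact Or.inr h) with h | ⟨G, hG, h⟩
      · exact Or.inl (Or.inl (Or.inr (Or.inl h)))
      · exact Or.inl (Or.inr ⟨G, hG, h⟩)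
    · by_cases ht' : t' ∈ F
      · rcases haux t' ht' (by
          intro v hvF
          rcases hvert v hvF with h | h | h
          · exact absurd (h ▸ hvF) ht
          · exact Or.inl h
          · exact Or.inr h) with h | ⟨G, hG, h⟩
        · exact Or.inl (Or.inl (Or.inr (Or.inr h)))
        · exact Or.inr ⟨G, hG, h⟩
      · refine Or.inl (Or.inl (Or.inl (hfull.2 F hF ?_)))
        intro v hvF
        rcases hvert v hvF with h | h | h
        · exact absurd (h ▸ hvF) ht
        · exact absurd (h ▸ hvF) ht'
        · exact h
  refine ⟨hfullT, ?_⟩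
  intro Z t t' hd hedge
  apply pair_notMem_susp hd
  refine hfullT.2 _ hedge ?_
  intro v hv
  simp only [Finset.mem_insert, Finset.mem_singleton] at hv
  rw [hd.eq]
  rcases hv with rfl | rfl
  · exact Or.inl (Or.inl (Or.inr (Or.inl rfl)))
  · exact Or.inl (Or.inl (Or.inr (Or.inr rfl)))
end

section
/- Suppose L is a metric flag labeled triangulation of the 2-sphere. Then no two 3-Euclidean vertices of L are joined by an edge of L; consequently, the closed stars of two distinct 3-Euclidean vertices have no 2-simplex of L in common. -/
open Geometry

namespace CoxOrb

/-- Every continuous nowhere zero complex function on `A` has a continuous logarithm. -/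
def HasLogs (A : Set E3) : Prop :=
  ∀ f : E3 → ℂ, ContinuousOn f A → (∀ x ∈ A, f x ≠ 0) →
    ∃ g : E3 → ℂ, ContinuousOn g A ∧ ∀ x ∈ A, Complex.exp (g x) = f x

theorem hasLogs_of_convex {A : Set E3} (hA : Convex ℝ A) : HasLogs A := by
  classical
  intro f hf hf0
  rcases A.eq_empty_or_nonempty with rfl | ⟨x0, hx0⟩
  · exact ⟨fun _ => 0, by simp, by simp⟩
  have hmem : ∀ (t : unitInterval) (x : A), (1 - (t : ℝ)) • x0 + (t : ℝ) • (x : E3) ∈ A :=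
    fun t x => hA hx0 x.2 (by linarith [t.2.2]) t.2.1 (by ring)
  let H : C(unitInterval × A, {z : ℂ // z ≠ 0}) :=
    ⟨fun p => ⟨f ((1 - (p.1 : ℝ)) • x0 + (p.1 : ℝ) • (p.2 : E3)), hf0 _ (hmem p.1 p.2)⟩, by
      refine Continuous.subtype_mk ?_ _
      exact hf.comp_continuous (by fun_prop) (fun p => hmem p.1 p.2)⟩
  let f0 : C(A, ℂ) := ContinuousMap.const _ (Complex.log (f x0))
  have H0 : ∀ a, H (0, a) = (fun z : ℂ ↦ (⟨_, z.exp_ne_zero⟩ : {z : ℂ // z ≠ 0})) (f0 a) := by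
    intro a
    apply Subtype.ext
    simp [H, f0, Complex.exp_log (hf0 x0 hx0)]
  let G := Complex.isCoveringMap_exp.liftHomotopy H f0 H0
  have hG := Complex.isCoveringMap_exp.liftHomotopy_lifts H f0 H0
  refine ⟨fun x => if hx : x ∈ A then G (1, ⟨x, hx⟩) else 0, ?_, ?_⟩
  · rw [continuousOn_iff_continuous_domRestrict]
    have : A.domRestrict (fun x => if hx : x ∈ A then G (1, ⟨x, hx⟩) else 0) =
        fun x : A => G (1, x) := by
      ext x; simp
    rw [this]
    fun_prop
  · intro x hx
    have := congrArg Subtype.val (congrFun hG (1, ⟨x, hx⟩))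
    simpa [hx, H, G] using this

theorem hasLogs_union {A B C D : Set E3} (hA : HasLogs A) (hB : HasLogs B)
    (hC : IsClosed C) (hD : IsClosed D) (hAC : (A ∪ B) ∩ C = A) (hBD : (A ∪ B) ∩ D = B)
    (hAB : IsPreconnected (A ∩ B)) : HasLogs (A ∪ B) := by
  classical
  intro f hf hf0
  obtain ⟨g, hg, hgf⟩ := hA f (hf.mono Set.subset_union_left) (fun x hx => hf0 x (Or.inl hx))
  obtain ⟨k, hk, hkf⟩ := hB f (hf.mono Set.subset_union_right) (fun x hx => hf0 x (Or.inr hx))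
  have key : ∃ c : ℂ, Complex.exp c = 1 ∧ ∀ x ∈ A ∩ B, g x = k x + c := by
    rcases (A ∩ B).eq_empty_or_nonempty with he | ⟨x0, hx0⟩
    · exact ⟨0, by simp, by simp [he]⟩
    have hpi : (2 * Real.pi * Complex.I : ℂ) ≠ 0 := Complex.two_pi_I_ne_zero
    have hint : ∀ x ∈ A ∩ B, ∃ n : ℤ, (g x - k x) / (2 * Real.pi * Complex.I) = n := by
      intro x hx
      have : Complex.exp (g x) = Complex.exp (k x) := by rw [hgf x hx.1, hkf x hx.2]
      obtain ⟨n, hn⟩ := Complex.exp_eq_exp_iff_exists_int.1 this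
      exact ⟨n, by rw [hn]; field_simp; ring⟩
    choose! n hn using hint
    have hcont : ContinuousOn (fun x => (g x - k x) / (2 * Real.pi * Complex.I)) (A ∩ B) :=
      ((hg.mono Set.inter_subset_left).sub (hk.mono Set.inter_subset_right)).div_const _
    have hncont : ContinuousOn n (A ∩ B) := by
      have h1 : ContinuousOn (fun x => ((n x : ℤ) : ℂ)) (A ∩ B) :=
        hcont.congr (fun x hx => (hn x hx).symm)
      have h2 : Topology.IsClosedEmbedding ((↑) : ℤ → ℂ) := Complex.isClosedEmbedding_intCast
      exact h2.isInducing.continuousOn_iff.2 h1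
    refine ⟨g x0 - k x0, ?_, ?_⟩
    · rw [Complex.exp_sub, hgf x0 hx0.1, hkf x0 hx0.2, div_self (hf0 x0 (Or.inl hx0.1))]
    · intro x hx
      have e1 := hAB.constant hncont hx hx0
      have e2 := hn x hx
      rw [e1, ← hn x0 hx0] at e2
      have := (div_left_inj' hpi).1 e2
      linear_combination this
  obtain ⟨c, hc, hcx⟩ := key
  have e2 : ∀ x ∈ B, (if x ∈ A then g x else k x + c) = k x + c := by
    intro x hx
    split_ifs with h
    · exact hcx x ⟨h, hx⟩
    · rfl
  refine ⟨fun x => if x ∈ A then g x else k x + c, ?_, ?_⟩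
  · have c1 : ContinuousOn (fun x => if x ∈ A then g x else k x + c) A :=
      hg.congr (fun x hx => by simp [hx])
    have c2 : ContinuousOn (fun x => if x ∈ A then g x else k x + c) B :=
      (hk.add continuousOn_const).congr e2
    intro x hx
    have w : ∀ (S T : Set E3), IsClosed T → (A ∪ B) ∩ T = S →
        ContinuousOn (fun x => if x ∈ A then g x else k x + c) S →
        ContinuousWithinAt (fun x => if x ∈ A then g x else k x + c) S x := by
      intro S T hT hST hS
      by_cases hxS : x ∈ S
      · exact hS x hxS
      · have hxT : x ∉ T := fun h => hxS (hST ▸ ⟨hx, h⟩)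
        have : x ∉ closure S := fun h =>
          hxT (closure_minimal (hST ▸ Set.inter_subset_right) hT h)
        exact continuousWithinAt_of_notMem_closure this
    exact (w A C hC hAC c1).union (w B D hD hBD c2)
  · intro x hx
    by_cases h : x ∈ A
    · simp [h, hgf x h]
    · have hxB : x ∈ B := hx.resolve_left h
      simp [h, Complex.exp_add, hc, hkf x hxB]

theorem no_log_on_circle (r : ℝ) (hr : 0 < r) (k : ℂ → ℂ)
    (hk : ContinuousOn k (Metric.sphere 0 r))
    (h : ∀ z ∈ Metric.sphere (0 : ℂ) r, Complex.exp (k z) = z) : False := by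
  let γ : ℝ → ℂ := fun θ => r * Complex.exp (θ * Complex.I)
  have hγ : ∀ θ, γ θ ∈ Metric.sphere (0 : ℂ) r := by
    intro θ
    simp [γ, Complex.norm_exp_ofReal_mul_I, abs_of_pos hr]
  have hγc : Continuous γ := by fun_prop
  have hkc : Continuous (fun θ => k (γ θ)) := hk.comp_continuous hγc hγ
  have hr0 : (r : ℂ) ≠ 0 := by exact_mod_cast hr.ne'
  have hint : ∀ θ : ℝ, ∃ n : ℤ,
      (k (γ θ) - Complex.log r - θ * Complex.I) / (2 * Real.pi * Complex.I) = n := by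
    intro θ
    have : Complex.exp (k (γ θ)) = Complex.exp (Complex.log r + θ * Complex.I) := by
      rw [h _ (hγ θ), Complex.exp_add, Complex.exp_log hr0]
    obtain ⟨n, hn⟩ := Complex.exp_eq_exp_iff_exists_int.1 this
    refine ⟨n, ?_⟩
    rw [div_eq_iff Complex.two_pi_I_ne_zero, hn]; ring
  choose n hn using hint
  have hncont : Continuous n := by
    have h1 : Continuous (fun θ => ((n θ : ℤ) : ℂ)) := by
      simp_rw [← hn]
      exact ((hkc.sub continuous_const).sub
        (Complex.continuous_ofReal.mul continuous_const)).div_const _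
    exact Complex.isClosedEmbedding_intCast.isInducing.continuous_iff.2 h1
  have e := PreconnectedSpace.constant inferInstance hncont (x := 0) (y := 2 * Real.pi)
  have h0 := hn 0
  have h1 := hn (2 * Real.pi)
  rw [← e, ← h0, div_left_inj' Complex.two_pi_I_ne_zero] at h1
  have hγe : γ (2 * Real.pi) = γ 0 := by
    simp [γ, Complex.exp_two_pi_mul_I]
  rw [hγe] at h1
  have : (2 * Real.pi * Complex.I : ℂ) = 0 := by
    push_cast at h1
    linear_combination -h1
  exact Complex.two_pi_I_ne_zero this

theorem convex_face_diff (L : SimplicialComplex ℝ E3) {F : Finset E3} (hF : F ∈ L.faces)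
    {s : E3} (hs : s ∈ F) : Convex ℝ (convexHull ℝ (F : Set E3) \ {s}) := by
  have hcomp : IsCompact (convexHull ℝ (F : Set E3)) := F.finite_toSet.isCompact_convexHull ℝ
  have hconv := convex_convexHull ℝ (F : Set E3)
  refine (hconv.mem_extremePoints_iff_convex_sdiff.1 ?_).2
  by_contra hne
  have hsub : (convexHull ℝ (F : Set E3)).extremePoints ℝ ⊆ (F.erase s : Finset E3) := by
    intro x hx
    have := extremePoints_convexHull_subset hx
    simp only [Finset.coe_erase]
    exact ⟨this, fun h => hne (by rw [← (Set.mem_singleton_iff.1 h)]; exact hx)⟩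
  have h1 : convexHull ℝ (F : Set E3) ⊆ convexHull ℝ ((F.erase s : Finset E3) : Set E3) := by
    rw [← closure_convexHull_extremePoints hcomp hconv]
    exact closure_minimal (convexHull_mono hsub)
      ((F.erase s).finite_toSet.isCompact_convexHull ℝ).isClosed
  have h2 := h1 (subset_convexHull ℝ _ hs)
  rcases (F.erase s).eq_empty_or_nonempty with he | hn
  · rw [he] at h2; simp at h2
  · have hsv : s ∈ L.vertices := L.down_closed hF (by simpa using hs) (by simp)
    have := (SimplicialComplex.vertex_mem_convexHull_iff hsv
      (L.down_closed hF (Finset.erase_subset _ _) hn)).1 h2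
    simp at this

/-- The part of a closed simplex near `s`, without `s`. -/
def piece (s : E3) (ε : ℝ) (F : Finset E3) : Set E3 :=
  (convexHull ℝ (F : Set E3) \ {s}) ∩ Metric.closedBall s ε

theorem piece_convex (L : SimplicialComplex ℝ E3) {F : Finset E3} (hF : F ∈ L.faces)
    {s : E3} (hs : s ∈ F) (ε : ℝ) : Convex ℝ (piece s ε F) :=
  (convex_face_diff L hF hs).inter (convex_closedBall _ _)

theorem piece_mono {s : E3} {ε : ℝ} {F G : Finset E3} (h : F ⊆ G) : piece s ε F ⊆ piece s ε G :=
  Set.inter_subset_inter_left _ (Set.sdiff_subset_sdiff_left (convexHull_mono (by exact_mod_cast h)))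

theorem piece_inter (L : SimplicialComplex ℝ E3) {F G : Finset E3} (hF : F ∈ L.faces)
    (hG : G ∈ L.faces) (s : E3) (ε : ℝ) : piece s ε F ∩ piece s ε G = piece s ε (F ∩ G) := by
  apply Set.Subset.antisymm
  · rintro x ⟨⟨⟨h1, h2⟩, h3⟩, ⟨⟨h4, h5⟩, h6⟩⟩
    refine ⟨⟨?_, h2⟩, h3⟩
    rw [Finset.coe_inter]
    exact L.inter_subset_convexHull hF hG ⟨h1, h4⟩
  · exact Set.subset_inter (piece_mono Finset.inter_subset_left) (piece_mono Finset.inter_subset_right)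

/-- The closed counterpart of `piece`. -/
theorem isClosed_hull (F : Finset E3) : IsClosed (convexHull ℝ (F : Set E3)) :=
  (F.finite_toSet.isCompact_convexHull ℝ).isClosed

theorem hasLogs_star (L : SimplicialComplex ℝ E3) {s : E3} {F₁ F₂ C : Finset E3}
    (h1 : F₁ ∈ L.faces) (h2 : F₂ ∈ L.faces) (hC : C ∈ L.faces)
    (s1 : s ∈ F₁) (s2 : s ∈ F₂) (sC : s ∈ C) (h12 : F₁ ∩ F₂ ⊆ C) (ε : ℝ) :
    HasLogs ((piece s ε F₁ ∪ piece s ε C) ∪ piece s ε F₂) := by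
  have hcap : ∀ {F G : Finset E3}, F ∈ L.faces → G ∈ L.faces → s ∈ F → s ∈ G →
      IsPreconnected (piece s ε F ∩ piece s ε G) := by
    intro F G hF hG hsF hsG
    rw [piece_inter L hF hG]
    refine (piece_convex L ?_ (Finset.mem_inter.2 ⟨hsF, hsG⟩) ε).isPreconnected
    exact L.down_closed hF Finset.inter_subset_left ⟨s, Finset.mem_inter.2 ⟨hsF, hsG⟩⟩
  have hl : HasLogs (piece s ε F₁ ∪ piece s ε C) := by
    refine hasLogs_union (hasLogs_of_convex (piece_convex L h1 s1 ε))
      (hasLogs_of_convex (piece_convex L hC sC ε)) (isClosed_hull F₁) (isClosed_hull C) ?_ ?_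
      (hcap h1 hC s1 sC) <;>
    · ext x; simp only [piece, Set.mem_inter_iff, Set.mem_union, Set.mem_sdiff]; tauto
  refine hasLogs_union hl (hasLogs_of_convex (piece_convex L h2 s2 ε))
    ((isClosed_hull F₁).union (isClosed_hull C)) (isClosed_hull F₂) ?_ ?_ ?_
  · ext x; simp only [piece, Set.mem_inter_iff, Set.mem_union, Set.mem_sdiff]; tauto
  · ext x; simp only [piece, Set.mem_inter_iff, Set.mem_union, Set.mem_sdiff]; tauto
  · have : (piece s ε F₁ ∪ piece s ε C) ∩ piece s ε F₂ = piece s ε C ∩ piece s ε F₂ := by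
      apply Set.Subset.antisymm
      · rintro x ⟨hx | hx, hx2⟩
        · have : x ∈ piece s ε (F₁ ∩ F₂) := by rw [← piece_inter L h1 h2]; exact ⟨hx, hx2⟩
          exact ⟨piece_mono h12 this, hx2⟩
        · exact ⟨hx, hx2⟩
      · exact Set.inter_subset_inter_left _ Set.subset_union_right
    rw [this]
    exact hcap hC h2 sC s2

/-- Near `s` the space of `L` is covered by faces containing `s`. -/
theorem exists_ball (L : SimplicialComplex ℝ E3) (hfin : L.faces.Finite) {s : E3}
    (hs : {s} ∈ L.faces) : ∃ δ > 0, ∀ x ∈ L.space, dist x s < δ →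
      ∃ F ∈ L.faces, s ∈ F ∧ x ∈ convexHull ℝ (F : Set E3) := by
  let N : Set E3 := ⋃ F ∈ {F ∈ L.faces | s ∉ F}, convexHull ℝ (F : Set E3)
  have hN : IsClosed N :=
    (hfin.subset (Set.sep_subset _ _)).isClosed_biUnion (fun F _ => isClosed_hull F)
  have hsN : s ∉ N := by
    simp only [N, Set.mem_iUnion, not_exists]
    rintro F ⟨hF, hsF⟩ h
    exact hsF ((SimplicialComplex.vertex_mem_convexHull_iff hs hF).1 h)
  obtain ⟨δ, hδ, hb⟩ := Metric.isOpen_iff.1 hN.isOpen_compl s hsN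
  refine ⟨δ, hδ, fun x hx hxs => ?_⟩
  obtain ⟨F, hF, hxF⟩ := SimplicialComplex.mem_space_iff.1 hx
  refine ⟨F, hF, ?_, hxF⟩
  by_contra hsF
  exact hb (Metric.mem_ball.2 hxs) (Set.mem_biUnion (show F ∈ {F ∈ L.faces | s ∉ F} from ⟨hF, hsF⟩) hxF)

instance factE3 : Fact (Module.finrank ℝ E3 = 2 + 1) := ⟨by simp⟩

/-- Small punctured neighbourhoods of a point of a topological sphere carry a nowhere zero function
without logarithm. -/
theorem not_hasLogs (X : Set E3) (h : X ≃ₜ (Metric.sphere (0 : E3) 1 : Set E3)) {s : E3}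
    (hs : s ∈ X) : ∃ ε₀ > 0, ∀ ε > 0, ε < ε₀ → ¬ HasLogs ((X ∩ Metric.closedBall s ε) \ {s}) := by
  classical
  let p : Metric.sphere (0 : E3) 1 := h ⟨s, hs⟩
  let ψ := stereographic' 2 (-p)
  let q : X := h.symm (-p)
  have hpn : p ≠ -p := by
    intro hp
    have : (p : E3) = -(p : E3) := congrArg Subtype.val hp
    have h0 : (p : E3) = 0 := by
      have h2 : (2 : ℝ) • (p : E3) = 0 := by
        rw [two_smul]; nth_rewrite 1 [this]; simp
      simpa using h2
    have := p.2
    rw [h0] at this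
    simp at this
  have hqs : (q : E3) ≠ s := by
    intro hq
    have : q = ⟨s, hs⟩ := Subtype.ext hq
    apply hpn
    change h ⟨s, hs⟩ = -p
    rw [← this]
    simp [q]
  have hps : p ∈ ψ.source := by simp [ψ, hpn]
  refine ⟨dist (q : E3) s, dist_pos.2 hqs, fun ε hε hεq hlog => ?_⟩
  let e : EuclideanSpace ℝ (Fin 2) ≃L[ℝ] ℂ :=
    Complex.orthonormalBasisOneI.repr.symm.toContinuousLinearEquiv
  let f : E3 → ℂ := fun x => if hx : x ∈ X then e (ψ (h ⟨x, hx⟩)) - e (ψ p) else 0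
  let Y := (X ∩ Metric.closedBall s ε) \ {s}
  have hsrc : ∀ x (hx : x ∈ X), x ∈ Metric.closedBall s ε → h ⟨x, hx⟩ ∈ ψ.source := by
    intro x hx hxb
    have : h ⟨x, hx⟩ ≠ -p := by
      intro hh
      have : (q : E3) = x := by simp [q, ← hh]
      rw [← this, Metric.mem_closedBall] at hxb
      linarith
    simpa [ψ] using this
  have hfY : ContinuousOn f Y := by
    rw [continuousOn_iff_continuous_domRestrict]
    have : Y.domRestrict f = fun x : Y => e (ψ (h ⟨x.1, x.2.1.1⟩)) - e (ψ p) := by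
      ext x
      simp [f, x.2.1.1]
    rw [this]
    have hc : Continuous (fun x : Y => ψ (h ⟨x.1, x.2.1.1⟩)) :=
      ψ.continuousOn.comp_continuous (by fun_prop) (fun x => hsrc _ _ x.2.1.2)
    exact (e.continuous.comp hc).sub continuous_const
  have hfY0 : ∀ x ∈ Y, f x ≠ 0 := by
    intro x hx h0
    simp only [f, hx.1.1, dif_pos, sub_eq_zero] at h0
    have h1 := ψ.injOn (hsrc x hx.1.1 hx.1.2) hps (e.injective h0)
    have h2 := congrArg Subtype.val (h.injective h1)
    exact hx.2 h2
  obtain ⟨g, hg, hgf⟩ := hlog f hfY hfY0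
  let σ : ℂ → E3 := fun z => h.symm (ψ.symm (e.symm (z + e (ψ p))))
  have htgt : ∀ y, y ∈ ψ.target := by intro y; simp [ψ]
  have hσ : Continuous σ := by
    have hc : Continuous (fun z : ℂ => ψ.symm (e.symm (z + e (ψ p)))) :=
      ψ.symm.continuousOn.comp_continuous (by fun_prop) (fun z => htgt _)
    fun_prop
  have hσX : ∀ z, σ z ∈ X := fun z => (h.symm _).2
  have hσ0 : σ 0 = s := by simp [σ, ψ.left_inv hps, p]
  have hfσ : ∀ z, f (σ z) = z := by
    intro z
    simp only [f, hσX, dif_pos]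
    simp [σ, ψ.right_inv (htgt _)]
  have hσs : ∀ z, σ z = s → z = 0 := by
    intro z hz
    have h1 := hfσ z
    have h2 := hfσ 0
    rw [hz] at h1; rw [hσ0] at h2
    rw [← h1, h2]
  obtain ⟨r, hr, hrb⟩ := Metric.continuousAt_iff.1 (hσ.continuousAt (x := 0)) ε hε
  rw [hσ0] at hrb
  have hmaps : Set.MapsTo σ (Metric.sphere 0 (r/2)) Y := by
    intro z hz
    have hz' : ‖z‖ = r/2 := by simpa using hz
    refine ⟨⟨hσX z, ?_⟩, ?_⟩
    · exact (hrb (by rw [dist_zero_right, hz']; linarith)).le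
    · intro hzs
      rw [hσs z hzs, norm_zero] at hz'
      linarith
  refine no_log_on_circle (r/2) (by linarith) (g ∘ σ) (hg.comp hσ.continuousOn hmaps) ?_
  intro z hz
  rw [Function.comp_apply, hgf _ (hmaps hz), hfσ]

theorem valence_three (L : SimplicialComplex ℝ E3) (hfin : L.faces.Finite)
    (hsph : Nonempty (L.space ≃ₜ (Metric.sphere (0 : E3) 1 : Set E3))) {s a b c : E3}
    (hs : {s} ∈ L.faces) (hab : a ≠ b) (hbc : b ≠ c) (hac : a ≠ c)
    (hl : linkVerts L s = {a, b, c}) : ({s, a, b} : Finset E3) ∈ L.faces := by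
  classical
  by_contra hn
  obtain ⟨h⟩ := hsph
  have hv : ∀ v, (v ≠ s ∧ ({s, v} : Finset E3) ∈ L.faces) ↔ v = a ∨ v = b ∨ v = c := by
    intro v
    have : v ∈ linkVerts L s ↔ v ∈ ({a, b, c} : Set E3) := by rw [hl]
    simpa [linkVerts] using this
  obtain ⟨has, hsa⟩ := (hv a).2 (by simp)
  obtain ⟨hbs, hsb⟩ := (hv b).2 (by simp)
  obtain ⟨hcs, hsc⟩ := (hv c).2 (by simp)
  have hmemv : ∀ G ∈ L.faces, s ∈ G → ∀ v ∈ G, v = s ∨ v = a ∨ v = b ∨ v = c := by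
    intro G hG hsG v hvG
    by_cases hvs : v = s
    · exact Or.inl hvs
    · refine Or.inr ((hv v).1 ⟨hvs, L.down_closed hG ?_ (by simp)⟩)
      intro x hx
      simp only [Finset.mem_insert, Finset.mem_singleton] at hx
      rcases hx with rfl | rfl <;> assumption
  have htri : ∀ u v, ∀ G ∈ L.faces, s ∈ G → u ∈ G → v ∈ G → ({s, u, v} : Finset E3) ∈ L.faces := by
    intro u v G hG h1 h2 h3
    refine L.down_closed hG ?_ (by simp)
    intro x hx
    simp only [Finset.mem_insert, Finset.mem_singleton] at hx
    rcases hx with rfl | rfl | rfl <;> assumption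
  let P : E3 → Finset E3 := fun u => if ({s, u, c} : Finset E3) ∈ L.faces then {s, u, c} else {s, u}
  have hPf : ∀ u, ({s, u} : Finset E3) ∈ L.faces → P u ∈ L.faces := by
    intro u hu
    simp only [P]; split_ifs with hh <;> assumption
  have hPs : ∀ u, s ∈ P u := by
    intro u; simp only [P]; split_ifs <;> simp
  have hPsub : ∀ u, P u ⊆ {s, u, c} := by
    intro u; simp only [P]; split_ifs
    · exact subset_rfl
    · intro x; simp; tauto
  have hPu : ∀ u, u ∈ P u := by
    intro u; simp only [P]; split_ifs <;> simp
  have hPcap : P a ∩ P b ⊆ {s, c} := by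
    intro x hx
    have h1 := hPsub a (Finset.mem_inter.1 hx).1
    have h2 := hPsub b (Finset.mem_inter.1 hx).2
    simp only [Finset.mem_insert, Finset.mem_singleton] at h1 h2 ⊢
    grind
  have hPcov : ∀ G ∈ L.faces, s ∈ G → G ⊆ P a ∨ G ⊆ {s, c} ∨ G ⊆ P b := by
    intro G hG hsG
    have hnab : ¬ (a ∈ G ∧ b ∈ G) := fun hh => hn (htri a b G hG hsG hh.1 hh.2)
    have hPc : ∀ u ∈ G, c ∈ G → c ∈ P u := by
      intro u hu hc
      simp [P, htri u c G hG hsG hu hc]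
    have hm := hmemv G hG hsG
    by_cases haG : a ∈ G
    · left
      intro x hx
      rcases hm x hx with rfl | rfl | rfl | rfl
      · exact hPs a
      · exact hPu _
      · exact absurd ⟨haG, hx⟩ hnab
      · exact hPc a haG hx
    · by_cases hbG : b ∈ G
      · right; right
        intro x hx
        rcases hm x hx with rfl | rfl | rfl | rfl
        · exact hPs b
        · exact absurd hx haG
        · exact hPu _
        · exact hPc b hbG hx
      · right; left
        intro x hx
        rcases hm x hx with rfl | rfl | rfl | rfl
        · simp
        · exact absurd hx haG
        · exact absurd hx hbG
        · simp
  have hsX : s ∈ L.space := SimplicialComplex.vertices_subset_space hs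
  obtain ⟨ε₀, hε₀, hno⟩ := not_hasLogs L.space h hsX
  obtain ⟨δ, hδ, hball⟩ := exists_ball L hfin hs
  have hε : 0 < min ε₀ δ / 2 := by have := lt_min hε₀ hδ; linarith
  have hm : min ε₀ δ / 2 < min ε₀ δ := by linarith
  refine hno (min ε₀ δ / 2) hε (hm.trans_le (min_le_left _ _)) ?_
  set ε := min ε₀ δ / 2
  have hεδ : ε < δ := hm.trans_le (min_le_right _ _)
  have heq : (L.space ∩ Metric.closedBall s ε) \ {s} =
      (piece s ε (P a) ∪ piece s ε {s, c}) ∪ piece s ε (P b) := by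
    apply Set.Subset.antisymm
    · rintro x ⟨⟨hx, hxb⟩, hxs⟩
      obtain ⟨G, hG, hsG, hxG⟩ := hball x hx (lt_of_le_of_lt hxb hεδ)
      have hxp : x ∈ piece s ε G := ⟨⟨hxG, hxs⟩, hxb⟩
      rcases hPcov G hG hsG with hh | hh | hh
      · exact Or.inl (Or.inl (piece_mono hh hxp))
      · exact Or.inl (Or.inr (piece_mono hh hxp))
      · exact Or.inr (piece_mono hh hxp)
    · have : ∀ F ∈ L.faces, piece s ε F ⊆ (L.space ∩ Metric.closedBall s ε) \ {s} :=
        fun F hF x hx => ⟨⟨SimplicialComplex.convexHull_subset_space hF hx.1.1, hx.2⟩, hx.1.2⟩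
      exact Set.union_subset (Set.union_subset (this _ (hPf a hsa)) (this _ hsc)) (this _ (hPf b hsb))
  rw [heq]
  exact hasLogs_star L (hPf a hsa) (hPf b hsb) hsc (hPs a) (hPs b) (by simp) hPcap ε

/-- Link data for a 3-Euclidean vertex, independent of the enumeration. -/
theorem threeEuclidean_data (L : SimplicialComplex ℝ E3) (m : E3 → E3 → ℕ)
    (hL : IsLabeledS2 L m) {s : E3} (hs : IsThreeEuclidean L m s) :
    (linkVerts L s).ncard = 3 ∧
    (∀ u ∈ linkVerts L s, ∀ v ∈ linkVerts L s, u ≠ v → ({s, u, v} : Finset E3) ∈ L.faces) ∧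
    (∀ u ∈ linkVerts L s, ∀ v ∈ linkVerts L s, ∀ w ∈ linkVerts L s, u ≠ v → v ≠ w → u ≠ w →
      1 / (m u v : ℝ) + 1 / (m v w : ℝ) + 1 / (m w u : ℝ) = 1) := by
  obtain ⟨hsf, a, b, c, hab, hbc, hac, hl, hsum⟩ := hs
  have key : ∀ {a b c : E3}, a ≠ b → b ≠ c → a ≠ c → linkVerts L s = {a, b, c} →
      ({s, a, b} : Finset E3) ∈ L.faces := fun h1 h2 h3 h4 =>
    valence_three L hL.finite hL.sphere hsf h1 h2 h3 h4
  have f1 := key hab hbc hac hl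
  have f2 := key hac hbc.symm hab (by rw [hl]; ext x; simp; tauto)
  have f3 := key hbc hac.symm hab.symm (by rw [hl]; ext x; simp; tauto)
  have sw : ∀ x y : E3, ({s, x, y} : Finset E3) = {s, y, x} := by
    intro x y; ext z; simp; tauto
  refine ⟨by rw [hl]; exact Set.ncard_eq_three.2 ⟨a, b, c, hab, hac, hbc, rfl⟩, ?_, ?_⟩
  · rw [hl]
    rintro u (rfl | rfl | rfl) v (rfl | rfl | rfl) huv <;>
      first
      | exact absurd rfl huv
      | assumption
      | (rw [sw]; assumption)
  · rw [hl]
    have e1 := hL.symm a b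
    have e2 := hL.symm b c
    have e3 := hL.symm a c
    rintro u (rfl | rfl | rfl) v (rfl | rfl | rfl) w (rfl | rfl | rfl) h1 h2 h3 <;>
      first
      | exact absurd rfl h1
      | exact absurd rfl h2
      | exact absurd rfl h3
      | (simp only [e1, e2, e3] at hsum ⊢; linarith)

theorem edge_of_tri (L : SimplicialComplex ℝ E3) {F : Finset E3} (hF : F ∈ L.faces) {u v : E3}
    (hu : u ∈ F) (hv : v ∈ F) : ({u, v} : Finset E3) ∈ L.faces := by
  refine L.down_closed hF ?_ (by simp)
  intro x hx
  simp only [Finset.mem_insert, Finset.mem_singleton] at hx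
  rcases hx with rfl | rfl <;> assumption

/-- The link of a 3-Euclidean vertex does not span a simplex. -/
theorem link_not_face (L : SimplicialComplex ℝ E3) (m : E3 → E3 → ℕ)
    (hL : IsLabeledS2 L m) (hflag : MetricFlag L m) {s : E3} (hs : IsThreeEuclidean L m s)
    {u v w : E3} (hu : u ∈ linkVerts L s) (hv : v ∈ linkVerts L s) (hw : w ∈ linkVerts L s)
    (huv : u ≠ v) (hvw : v ≠ w) (huw : u ≠ w) : ({u, v, w} : Finset E3) ∉ L.faces := by
  intro hf
  have h1 := (hflag u v w huv hvw huw (edge_of_tri L hf (by simp) (by simp))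
    (edge_of_tri L hf (by simp) (by simp)) (edge_of_tri L hf (by simp) (by simp))).1 hf
  have h2 := (threeEuclidean_data L m hL hs).2.2 u hu v hv w hw huv hvw huw
  linarith

end CoxOrb

open CoxOrb

/-- In a metric flag labeled triangulation of the 2-sphere, no two 3-Euclidean
vertices are joined by an edge; consequently, the closed stars of two distinct
3-Euclidean vertices have no 2-simplex of `L` in common. -/
theorem threeEuclidean_not_adjacent
    (L : SimplicialComplex ℝ E3) (m : E3 → E3 → ℕ)
    (hL : IsLabeledS2 L m) (hflag : MetricFlag L m) :
    (∀ s s' : E3, IsThreeEuclidean L m s → IsThreeEuclidean L m s' → s ≠ s' →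
      ({s, s'} : Finset E3) ∉ L.faces) ∧
    (∀ s s' : E3, IsThreeEuclidean L m s → IsThreeEuclidean L m s' → s ≠ s' →
      ∀ F ∈ L.faces, F.card = 3 → ¬ (F ∈ star L s ∧ F ∈ star L s')) := by
  have part1 : ∀ s s' : E3, IsThreeEuclidean L m s → IsThreeEuclidean L m s' → s ≠ s' →
      ({s, s'} : Finset E3) ∉ L.faces := by
    intro s s' hs hs' hne hedge
    obtain ⟨hc, ht, -⟩ := threeEuclidean_data L m hL hs
    obtain ⟨hc', ht', -⟩ := threeEuclidean_data L m hL hs'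
    have hs'l : s' ∈ linkVerts L s := ⟨hne.symm, hedge⟩
    have hfin : (linkVerts L s).Finite := Set.finite_of_ncard_pos (by omega)
    have hcard : (linkVerts L s \ {s'}).ncard = 2 := by
      rw [Set.ncard_sdiff_singleton_of_mem hs'l, hc]
    obtain ⟨a, b, hab, hsab⟩ := Set.ncard_eq_two.1 hcard
    have ha : a ∈ linkVerts L s \ {s'} := by rw [hsab]; simp
    have hb : b ∈ linkVerts L s \ {s'} := by rw [hsab]; simp
    have has' : a ≠ s' := ha.2
    have hbs' : b ≠ s' := hb.2
    have ha' : a ∈ linkVerts L s' :=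
      ⟨has', edge_of_tri L (ht s' hs'l a ha.1 has'.symm) (by simp) (by simp)⟩
    have hb' : b ∈ linkVerts L s' :=
      ⟨hbs', edge_of_tri L (ht s' hs'l b hb.1 hbs'.symm) (by simp) (by simp)⟩
    exact link_not_face L m hL hflag hs hs'l ha.1 hb.1 has'.symm hab hbs'.symm
      (ht' a ha' b hb' hab)
  refine ⟨part1, ?_⟩
  rintro s s' hs hs' hne F hF hF3 ⟨hFs, hFs'⟩
  have hin : ∀ t : E3, IsThreeEuclidean L m t → F ∈ star L t → t ∈ F := by
    rintro t ht ⟨-, G, hG, htG, hFG⟩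
    by_contra htF
    obtain ⟨u, v, w, huv, huw, hvw, rfl⟩ := Finset.card_eq_three.1 hF3
    have hmem : ∀ x ∈ ({u, v, w} : Finset E3), x ∈ linkVerts L t := fun x hx =>
      ⟨fun h => htF (h ▸ hx), edge_of_tri L hG htG (hFG hx)⟩
    exact link_not_face L m hL hflag ht (hmem u (by simp)) (hmem v (by simp)) (hmem w (by simp))
      huv hvw huw hF
  exact part1 s s' hs hs' hne (edge_of_tri L hF (hin s hs hFs) (hin s' hs' hFs'))
end
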